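/- arXiv:math/0309316 — 3 statements merged into one kernel-verified Lean document; each statement's English description precedes it below -/
import Mathlib

section
/- For fixed integers n, d, m, k, the set of polynomials f in n complex variables with deg f = d, isolated affine singularities, total Milnor number μ(f) = m and #B_aff(f) = k is a constructible subset of the coefficient space ℂ^N of polynomials of degree at most d. -/
/- Common definitions: singularity-theoretic invariants of complex polynomials,
following Bodin–Tibăr, "Topological equivalence of complex polynomials". -/

open MvPolynomial Set

noncomputable section

namespace PolyTop

variable {n : ℕ}

/-- The affine singular locus of a polynomial. -/
def AffSing (f : MvPolynomial (Fin n) ℂ) : Set (Fin n → ℂ) :=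
  {x | ∀ i, eval x (pderiv i f) = 0}

/-- The Jacobian ideal of `f`, translated so that `p` becomes the origin, inside the
ring of formal power series. -/
def jacIdeal (f : MvPolynomial (Fin n) ℂ) (p : Fin n → ℂ) :
    Ideal (MvPowerSeries (Fin n) ℂ) :=
  Ideal.span (Set.range fun i : Fin n =>
    (MvPolynomial.coeToMvPowerSeries.ringHom
      ((aeval fun j : Fin n => (X j + C (p j) : MvPolynomial (Fin n) ℂ)) (pderiv i f))))

/-- The local Milnor number of `f` at `p`: the `ℂ`-dimension of the quotient of the ring
of formal power series centred at `p` by the ideal of the partial derivatives of `f`. -/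
def muLoc (f : MvPolynomial (Fin n) ℂ) (p : Fin n → ℂ) : ℕ :=
  Module.finrank ℂ (MvPowerSeries (Fin n) ℂ ⧸ jacIdeal f p)

/-- The total Milnor number `μ(f)`. -/
def mu (f : MvPolynomial (Fin n) ℂ) : ℕ :=
  ∑ᶠ p ∈ AffSing f, muLoc f p

/-- The sum `μ_t(f)` of the local Milnor numbers in the fibre `f⁻¹(t)`. -/
def muFib (f : MvPolynomial (Fin n) ℂ) (t : ℂ) : ℕ :=
  ∑ᶠ p ∈ AffSing f ∩ {x | eval x f = t}, muLoc f p

/-- The set of affine critical values. -/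
def Baff (f : MvPolynomial (Fin n) ℂ) : Set ℂ :=
  (fun x => eval x f) '' AffSing f

/-- Projective space `ℙ^{k-1}`. -/
abbrev Proj (k : ℕ) := Projectivization ℂ (Fin k → ℂ)

/-- A chosen index at which the (chosen) representative of a point of projective
space does not vanish. -/
def pivot {k : ℕ} (P : Proj k) : Fin k :=
  (Function.ne_iff.mp P.rep_nonzero).choose

/-- The set `W(f) ⊂ ℙ^{n-1}` of singular directions of the top-degree part of `f`;
`f` has isolated singularities at infinity when `W(f)` is finite. -/
def Wset (f : MvPolynomial (Fin n) ℂ) : Set (Proj n) :=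
  {P | ∀ i, eval P.rep (pderiv i (homogeneousComponent f.totalDegree f)) = 0}

/-- The set `Σ(f) ⊂ W(f)`. -/
def SigmaSet (f : MvPolynomial (Fin n) ℂ) : Set (Proj n) :=
  {P | P ∈ Wset f ∧ eval P.rep (homogeneousComponent (f.totalDegree - 1) f) = 0}

/-- The homogenisation `P̃(x,x₀)` of `f`, with `x₀` as variable `0` and `xᵢ` as
variable `i.succ`. -/
def homog (f : MvPolynomial (Fin n) ℂ) : MvPolynomial (Fin (n + 1)) ℂ :=
  ∑ k ∈ Finset.range (f.totalDegree + 1),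
    X 0 ^ (f.totalDegree - k) * rename Fin.succ (homogeneousComponent k f)

/-- The defining polynomial `P̃ - t x₀ ^ d` of the projective closure `X_t` of `f⁻¹(t)`. -/
def XtPoly (f : MvPolynomial (Fin n) ℂ) (t : ℂ) : MvPolynomial (Fin (n + 1)) ℂ :=
  homog f - C t * X 0 ^ f.totalDegree

/-- The local defining equation of a projective hypersurface `{F = 0}` in the affine
chart `{x_j = 1}`. -/
def chartPoly {k : ℕ} (j : Fin (k + 1)) (F : MvPolynomial (Fin (k + 1)) ℂ) :
    MvPolynomial (Fin k) ℂ :=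
  aeval (j.insertNth 1 X) F

/-- The coordinates, in the affine chart `{x_j = 1}`, of the projective point with
homogeneous coordinates `v`. -/
def chartPoint {k : ℕ} (j : Fin (k + 1)) (v : Fin (k + 1) → ℂ) : Fin k → ℂ :=
  fun i => v (j.succAbove i) / v j

/-- The local Milnor number `μ_p(X_t)` of the projective closure of `f⁻¹(t)` at the
point `[p:0]` at infinity, computed in an affine chart containing the point. -/
def muAtInf (f : MvPolynomial (Fin n) ℂ) (P : Proj n) (t : ℂ) : ℕ :=
  muLoc (chartPoly (pivot P).succ (XtPoly f t))
    (chartPoint (pivot P).succ (Fin.cons 0 P.rep))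

/-- The generic local Milnor number `μ_{p,gen}(f)`: the value of `μ_p(X_t)` attained for
all but finitely many `t`. -/
def muGenInf (f : MvPolynomial (Fin n) ℂ) (P : Proj n) : ℕ :=
  sInf {m | {t : ℂ | muAtInf f P t ≠ m}.Finite}

/-- The Milnor–Lê number `λ_{p,t}(f)`. -/
def lambdaPT (f : MvPolynomial (Fin n) ℂ) (P : Proj n) (t : ℂ) : ℕ :=
  muAtInf f P t - muGenInf f P

/-- `λ_t(f)`. -/
def lambdaT (f : MvPolynomial (Fin n) ℂ) (t : ℂ) : ℕ :=
  ∑ᶠ P ∈ SigmaSet f, lambdaPT f P t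

/-- The Milnor–Lê number at infinity `λ(f)`. -/
def lambdaTot (f : MvPolynomial (Fin n) ℂ) : ℕ :=
  ∑ᶠ t : ℂ, lambdaT f t

/-- The set of critical values at infinity. -/
def Binf (f : MvPolynomial (Fin n) ℂ) : Set ℂ :=
  {t | 0 < lambdaT f t}

/-- The bifurcation set `B(f)`. -/
def Bset (f : MvPolynomial (Fin n) ℂ) : Set ℂ :=
  Baff f ∪ Binf f

/-- Topological equivalence of two polynomial functions `ℂⁿ → ℂ`. -/
def TopEquiv (f g : MvPolynomial (Fin n) ℂ) : Prop :=
  ∃ (Φ : (Fin n → ℂ) ≃ₜ (Fin n → ℂ)) (Ψ : ℂ ≃ₜ ℂ),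
    ∀ x, Ψ (eval x f) = eval (Φ x) g

/-- A FISI family of degree `d` on `[0,1]`: the coefficients are polynomial functions of
the parameter, the degree is constantly `d`, and each member has isolated affine
singularities and isolated singularities at infinity. -/
structure FISIFamily (n d : ℕ) (F : ℝ → MvPolynomial (Fin n) ℂ) : Prop where
  polyCoeff : ∀ m : Fin n →₀ ℕ, ∃ q : Polynomial ℂ,
    ∀ s ∈ Icc (0:ℝ) 1, coeff m (F s) = q.eval (s : ℂ)
  degEq : ∀ s ∈ Icc (0:ℝ) 1, (F s).totalDegree = d
  isolAff : ∀ s ∈ Icc (0:ℝ) 1, (AffSing (F s)).Finite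
  isolInf : ∀ s ∈ Icc (0:ℝ) 1, (Wset (F s)).Finite

/-- A canonical distance between two points of projective space: the Hausdorff distance
between their sets of unit-norm representatives. -/
def projDist {k : ℕ} (P Q : Proj k) : ℝ :=
  Metric.hausdorffDist {v : Fin k → ℂ | ∃ c : ℂ, v = c • P.rep ∧ ‖v‖ = 1}
    {v : Fin k → ℂ | ∃ c : ℂ, v = c • Q.rep ∧ ‖v‖ = 1}

/-- Continuity (w.r.t. the distance `projDist`) of a family of points of projective
space, on a set of parameters. -/
def ProjContinuousOn {k : ℕ} (p : ℝ → Proj k) (Ssub : Set ℝ) : Prop :=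
  ∀ s₀ ∈ Ssub, ∀ ε > 0, ∃ δ > 0, ∀ s ∈ Ssub, |s - s₀| < δ → projDist (p s) (p s₀) < ε

/-- A Zariski-closed subset of the affine space `ℂ^σ`: the common zero set of a family of
polynomials. -/
def ZClosed {σ : Type*} (S : Set (σ → ℂ)) : Prop :=
  ∃ I : Set (MvPolynomial σ ℂ), S = {x | ∀ g ∈ I, eval x g = 0}

/-- A constructible subset of affine space: a finite union of sets, each the intersection
of a Zariski-open and a Zariski-closed subset. -/
def IsConstructibleC {σ : Type*} (S : Set (σ → ℂ)) : Prop :=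
  ∃ (k : ℕ) (U Z : Fin k → Set (σ → ℂ)),
    (∀ i, ZClosed (U i)ᶜ) ∧ (∀ i, ZClosed (Z i)) ∧ S = ⋃ i, U i ∩ Z i

/-- Index type for the coefficients of a polynomial of degree at most `d` in `n`
variables: exponent vectors of total degree at most `d` (a finite type). -/
abbrev CoeffIdx (n d : ℕ) := {e : Fin n → ℕ // ∑ i, e i ≤ d}

instance (n d : ℕ) : Fintype (CoeffIdx n d) :=
  Set.Finite.fintype (s := {e : Fin n → ℕ | ∑ i, e i ≤ d})
    (Set.Finite.subset (Set.Finite.pi fun _ : Fin n => Set.finite_Iic d)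
      (fun e he => Set.mem_pi.mpr fun i _ =>
        le_trans (Finset.single_le_sum (f := e) (fun _ _ => Nat.zero_le _)
          (Finset.mem_univ i)) he))

/-- The polynomial with coefficient vector `c`, where the coefficient space
`ℂ^N = ℂ^(CoeffIdx n d)` parametrises the polynomials of degree at most `d`. -/
def toPoly {n d : ℕ} (c : CoeffIdx n d → ℂ) : MvPolynomial (Fin n) ℂ :=
  ∑ e : CoeffIdx n d, c e • monomial (Finsupp.equivFunOnFinite.symm e.1) (1 : ℂ)

/-- The real-coordinate presentation of a point of `ℂ^k × ℝ`, used to speak of real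
algebraic subvarieties of `ℂ^k × [0,1]`. -/
def reCoords {k : ℕ} (v : Fin k → ℂ) (s : ℝ) : (Fin k × Fin 2) ⊕ Unit → ℝ :=
  Sum.elim (fun q => if q.2 = 0 then (v q.1).re else (v q.1).im) (fun _ => s)

/-- An algebraic braid of finite subsets of `ℂ^k` over the parameter interval `[0,u]`:
the total space is a real algebraic subvariety of `ℂ^k × [0,u]`, the multivalued map is
continuous for the Hausdorff distance, and the cardinality is constant. -/
def IsAlgebraicBraid {k : ℕ} (u : ℝ) (Ω : ℝ → Set (Fin k → ℂ)) : Prop :=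
  (∀ s ∈ Icc (0:ℝ) u, (Ω s).Finite) ∧
  (∃ (m : ℕ) (q : Fin m → MvPolynomial ((Fin k × Fin 2) ⊕ Unit) ℝ),
    ∀ v : Fin k → ℂ, ∀ s ∈ Icc (0:ℝ) u,
      (v ∈ Ω s ↔ ∀ i, eval (reCoords v s) (q i) = 0)) ∧
  (∀ s₀ ∈ Icc (0:ℝ) u, ∀ ε > 0, ∃ δ > 0, ∀ s ∈ Icc (0:ℝ) u, |s - s₀| < δ →
    Metric.hausdorffDist (Ω s) (Ω s₀) < ε) ∧
  (∀ s ∈ Icc (0:ℝ) u, (Ω s).ncard = (Ω 0).ncard)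

/-- An algebraic braid of finite subsets of `ℂ` over `[0,u]`. -/
def IsAlgebraicBraidC (u : ℝ) (Ω : ℝ → Set ℂ) : Prop :=
  (∀ s ∈ Icc (0:ℝ) u, (Ω s).Finite) ∧
  (∃ (m : ℕ) (q : Fin m → MvPolynomial (Fin 3) ℝ),
    ∀ x : ℂ, ∀ s ∈ Icc (0:ℝ) u,
      (x ∈ Ω s ↔ ∀ i, eval ![x.re, x.im, s] (q i) = 0)) ∧
  (∀ s₀ ∈ Icc (0:ℝ) u, ∀ ε > 0, ∃ δ > 0, ∀ s ∈ Icc (0:ℝ) u, |s - s₀| < δ →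
    Metric.hausdorffDist (Ω s) (Ω s₀) < ε) ∧
  (∀ s ∈ Icc (0:ℝ) u, (Ω s).ncard = (Ω 0).ncard)

/-- The affine cone (including the origin) over a subset of projective space. -/
def coneOf {k : ℕ} (A : Set (Proj k)) : Set (Fin k → ℂ) :=
  {0} ∪ {v | ∃ h : v ≠ 0, Projectivization.mk ℂ v h ∈ A}

/-- An algebraic braid of finite subsets of projective space `ℙ^{k-1}` over `[0,u]`:
the affine cone of the total space is a real algebraic subvariety of `ℂ^k × [0,u]`,
the multivalued map is continuous for the Hausdorff distance (w.r.t. `projDist`),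
and the cardinality is constant. -/
def IsAlgebraicBraidProj {k : ℕ} (u : ℝ) (A : ℝ → Set (Proj k)) : Prop :=
  (∀ s ∈ Icc (0:ℝ) u, (A s).Finite) ∧
  (∃ (m : ℕ) (q : Fin m → MvPolynomial ((Fin k × Fin 2) ⊕ Unit) ℝ),
    ∀ v : Fin k → ℂ, ∀ s ∈ Icc (0:ℝ) u,
      (v ∈ coneOf (A s) ↔ ∀ i, eval (reCoords v s) (q i) = 0)) ∧
  (∀ s₀ ∈ Icc (0:ℝ) u, ∀ ε > 0, ∃ δ > 0, ∀ s ∈ Icc (0:ℝ) u, |s - s₀| < δ →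
    (∀ P ∈ A s, ∃ Q ∈ A s₀, projDist P Q < ε) ∧
    (∀ Q ∈ A s₀, ∃ P ∈ A s, projDist P Q < ε)) ∧
  (∀ s ∈ Icc (0:ℝ) u, (A s).ncard = (A 0).ncard)

/-- The singular locus of the projective hypersurface `{F = 0} ⊂ ℙ^m`: the points where,
in an affine chart containing the point, the local defining equation and all its partial
derivatives vanish. -/
def SingProjHyp {m : ℕ} (F : MvPolynomial (Fin (m + 1)) ℂ) : Set (Proj (m + 1)) :=
  {P | eval (chartPoint (pivot P) P.rep) (chartPoly (pivot P) F) = 0 ∧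
    ∀ i, eval (chartPoint (pivot P) P.rep) (pderiv i (chartPoly (pivot P) F)) = 0}

/-- The embedding `ℙ^{n-1} ≅ H^∞ ⊂ ℙ^n`, `[p] ↦ [p:0]` (the hyperplane at infinity
being `{x₀ = 0}`, the variable `x₀` having index `0`). -/
def projEmbInf (P : Proj n) : Proj (n + 1) :=
  Projectivization.mk ℂ (Fin.cons 0 P.rep)
    (by
      intro h
      apply P.rep_nonzero
      funext i
      have h' := congrFun h i.succ
      simpa using h')

/-- The local defining equation of `X = {P̃ - t x₀^d = 0} ⊂ ℙ^n × ℂ` in the affine chart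
`{x_j = 1}` of `ℙ^n`: a polynomial in the `n` chart coordinates (indices `i.castSucc`)
and in `t` (index `Fin.last n`). -/
def XXchartEq (f : MvPolynomial (Fin n) ℂ) (j : Fin (n + 1)) :
    MvPolynomial (Fin (n + 1)) ℂ :=
  rename Fin.castSucc (chartPoly j (homog f)) -
    X (Fin.last n) * rename Fin.castSucc (chartPoly j (X 0 ^ f.totalDegree))

/-- The singular locus of the hypersurface `X = {P̃ - t x₀^d = 0} ⊂ ℙ^n × ℂ`: the points
where, in an affine chart, the defining equation and all its partial derivatives (with
respect to the chart coordinates and to `t`) vanish. -/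
def SingXX (f : MvPolynomial (Fin n) ℂ) : Set (Proj (n + 1) × ℂ) :=
  {z | eval (Fin.snoc (chartPoint (pivot z.1) z.1.rep) z.2) (XXchartEq f (pivot z.1)) = 0 ∧
    ∀ i, eval (Fin.snoc (chartPoint (pivot z.1) z.1.rep) z.2)
      (pderiv i (XXchartEq f (pivot z.1))) = 0}

/-- The affine chart of `ℙ^n` used around a point `[p:0]` at infinity: the chart
`{x_j = 1}` where `j` is (the index in `Fin (n+1)` of) a nonvanishing coordinate
of `p`. -/
def chartIdx (p : Proj n) : Fin (n + 1) := (pivot p).succ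

/-- In the chart around `[p:0]`, the defining equation of `X(s) ⊂ ℙ^n × ℂ`, as a
polynomial in the `n` chart coordinates (indices `i.castSucc`) and `t`
(index `Fin.last n`). -/
def tubeEq (F : ℝ → MvPolynomial (Fin n) ℂ) (p : Proj n) (s : ℝ) :
    MvPolynomial (Fin (n + 1)) ℂ :=
  XXchartEq (F s) (chartIdx p)

/-- The chart coordinates of the point `([p:0], c) ∈ ℙ^n × ℂ`. -/
def tubeCtr (p : Proj n) (c : ℂ) : Fin (n + 1) → ℂ :=
  Fin.snoc (chartPoint (chartIdx p) (Fin.cons 0 p.rep)) c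

/-- Squared euclidean distance to `w` in the chart. -/
def sqDist (w z : Fin (n + 1) → ℂ) : ℝ := ∑ i, Complex.normSq (z i - w i)

/-- The tube `T_s = B_ε ∩ X(s) ∩ g_s⁻¹(D_η(c))`, in the chart around `([p:0],c)`. -/
def Ttube (F : ℝ → MvPolynomial (Fin n) ℂ) (p : Proj n) (c : ℂ) (ε η : ℝ) (s : ℝ) :
    Set (Fin (n + 1) → ℂ) :=
  {z | eval z (tubeEq F p s) = 0 ∧ sqDist (tubeCtr p c) z ≤ ε ^ 2 ∧
    dist (z (Fin.last n)) c ≤ η}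

/-- The tube `T_s` as a topological space. -/
abbrev Tsub (F : ℝ → MvPolynomial (Fin n) ℂ) (p : Proj n) (c : ℂ) (ε η : ℝ) (s : ℝ) :
    Type :=
  {z : Fin (n + 1) → ℂ // z ∈ Ttube F p c ε η s}

/-- Membership in the middle stratum `{p} × D_η(c)` of a tube: the chart coordinates of
the point of `ℙ^n` agree with those of `[p:0]`. -/
def OnAxis (p : Proj n) (c : ℂ) (z : Fin (n + 1) → ℂ) : Prop :=
  ∀ i : Fin n, z i.castSucc = tubeCtr p c i.castSucc

/-- `T_0` is a Milnor tube: for every `t ∈ D_η(c)`, the fibre `g_0⁻¹(t)` meets the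
sphere `S_ε = ∂B_ε` transversally (the level-set equations of the fibre together with
the derivative of the squared-distance function form a surjective real-linear map). -/
def MilnorTube (F : ℝ → MvPolynomial (Fin n) ℂ) (p : Proj n) (c : ℂ) (ε η : ℝ) : Prop :=
  ∀ t ∈ Metric.closedBall c η, ∀ z : Fin (n + 1) → ℂ,
    eval z (tubeEq F p 0) = 0 → z (Fin.last n) = t →
    sqDist (tubeCtr p c) z = ε ^ 2 →
    Function.Surjective (fun v : Fin (n + 1) → ℂ =>
      ((fderiv ℝ (fun w => eval w (tubeEq F p 0)) z v, v (Fin.last n)),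
        fderiv ℝ (fun w => sqDist (tubeCtr p c) w) z v))

/-- A topological space is locally contractible if every point has arbitrarily small
neighbourhoods which contract to a point inside any given neighbourhood. -/
def LocallyContr (Xs : Type*) [TopologicalSpace Xs] : Prop :=
  ∀ x : Xs, ∀ U ∈ nhds x, ∃ V ∈ nhds x, V ⊆ U ∧
    ∃ H : ℝ × Xs → Xs, ContinuousOn H (Icc (0:ℝ) 1 ×ˢ V) ∧
      (∀ v ∈ V, H (0, v) = v) ∧ (∃ y, ∀ v ∈ V, H (1, v) = y) ∧
      (∀ t ∈ Icc (0:ℝ) 1, ∀ v ∈ V, H (t, v) ∈ U)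

end PolyTop

/-!
Over an algebraically closed field the Boolean combinations of polynomial equations are closed under
quantification over finite-dimensional spaces: this is Chevalley's theorem, transferred from prime
spectra to points by the Nullstellensatz. It therefore suffices to express the condition on `f` by
such a formula. A set has `r` elements if and only if it is the range of an injective `r`-tuple,
which settles `#B_aff(f) = k` and lets the equation `μ(f) = m` quantify over the finitely many
distributions of `m` over at most `m` singular points, since local Milnor numbers at isolated
singularities are positive. Finally, by Nakayama's lemma, an ideal `J` of finite codimension in a
local ring has codimension `ν` if and only if `J + 𝔪 ^ (ν + 1)` does. Hence `μ_p(f) = ν` is a rank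
condition on a finite matrix whose entries are polynomial in `p` and the coefficients of `f`.
-/

namespace PolyTop

section PolynomialMaps

variable (K : Type*) [CommRing K] (E : Type*) [AddCommGroup E] [Module K E]

/-- The algebra of polynomial functions on a module `E`: the functions generated by the linear
forms. It is the coordinate ring of `E` when `E` is a finite-dimensional space over an infinite
field. -/
def polyFun : Subalgebra K (E → K) :=
  Algebra.adjoin K (range fun φ : Module.Dual K E => (φ : E → K))

variable {E} {F G H : Type*} [AddCommGroup F] [Module K F] [AddCommGroup G] [Module K G]
  [AddCommGroup H] [Module K H]

/-- Polynomial maps between modules: combinations of constant vectors with polynomial functions as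
coefficients. The target may be infinite-dimensional, so that families of polynomials or of power
series depending polynomially on parameters are covered. -/
@[fun_prop]
def IsPolyMap (f : E → F) : Prop :=
  f ∈ Submodule.span (polyFun K E) (range fun (v : F) (_ : E) => v)

namespace IsPolyMap

variable {K}

@[fun_prop]
theorem const (v : F) : IsPolyMap K fun _ : E => v :=
  Submodule.subset_span ⟨v, rfl⟩

theorem smul_of_mem_polyFun {a : E → K} (ha : a ∈ polyFun K E) {g : E → F} (hg : IsPolyMap K g) :
    IsPolyMap K fun x => a x • g x :=
  Submodule.smul_mem _ (⟨a, ha⟩ : polyFun K E) hg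

theorem of_mem_polyFun {f : E → K} (hf : f ∈ polyFun K E) : IsPolyMap K f := by
  simpa only [smul_eq_mul, mul_one] using smul_of_mem_polyFun hf (const (1 : K))

theorem induction {p : (E → F) → Prop}
    (smul_const : ∀ f ∈ polyFun K E, ∀ v : F, p fun x => f x • v)
    (add : ∀ f g, p f → p g → p fun x => f x + g x) {f : E → F} (hf : IsPolyMap K f) : p f := by
  refine Submodule.closure_induction (p := fun f _ => p f) ?_ ?_ ?_ hf
  · exact (congrArg p (funext fun _ => zero_smul K 0)).mp (smul_const 0 (zero_mem _) 0)
  · exact fun f g _ _ => add f g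
  · rintro a _ ⟨v, rfl⟩
    exact smul_const a a.2 v

theorem mem_polyFun {f : E → K} (hf : IsPolyMap K f) : f ∈ polyFun K E :=
  hf.induction (fun _ ha v => mul_mem ha (algebraMap_mem _ v)) fun _ _ => add_mem

@[fun_prop]
theorem add {f g : E → F} (hf : IsPolyMap K f) (hg : IsPolyMap K g) :
    IsPolyMap K fun x => f x + g x :=
  Submodule.add_mem _ hf hg

@[fun_prop]
theorem sum {ι : Type*} {s : Finset ι} {f : ι → E → F} (hf : ∀ i, IsPolyMap K (f i)) :
    IsPolyMap K fun x => ∑ i ∈ s, f i x := by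
  simpa only [IsPolyMap, Finset.sum_fn] using Submodule.sum_mem _ fun i _ => hf i

theorem linearMap_comp (L : F →ₗ[K] G) {f : E → F} (hf : IsPolyMap K f) :
    IsPolyMap K fun x => L (f x) :=
  hf.induction (p := fun f => IsPolyMap K fun x => L (f x))
    (fun a ha v => by simpa only [map_smul] using smul_of_mem_polyFun ha (const (L v)))
    fun f g hf hg => by simpa only [map_add] using hf.add hg

theorem bilin (B : F →ₗ[K] G →ₗ[K] H) {f : E → F} {g : E → G} (hf : IsPolyMap K f)
    (hg : IsPolyMap K g) : IsPolyMap K fun x => B (f x) (g x) := by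
  refine hf.induction (p := fun f => IsPolyMap K fun x => B (f x) (g x)) (fun a ha v => ?_)
    fun f₁ f₂ h₁ h₂ => by simpa only [map_add, LinearMap.add_apply] using h₁.add h₂
  simpa only [map_smul, LinearMap.smul_apply] using
    smul_of_mem_polyFun ha (linearMap_comp (B v) hg)

@[fun_prop]
theorem smul {f : E → K} {g : E → F} (hf : IsPolyMap K f) (hg : IsPolyMap K g) :
    IsPolyMap K fun x => f x • g x :=
  bilin (LinearMap.lsmul K F) hf hg

@[fun_prop]
theorem mul {A : Type*} [CommRing A] [Algebra K A] {f g : E → A} (hf : IsPolyMap K f)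
    (hg : IsPolyMap K g) : IsPolyMap K fun x => f x * g x :=
  bilin (LinearMap.mul K A) hf hg

theorem algebraMap {A : Type*} [CommRing A] [Algebra K A] {f : E → K} (hf : IsPolyMap K f) :
    IsPolyMap K fun x => algebraMap K A (f x) :=
  linearMap_comp (Algebra.linearMap K A) hf

@[fun_prop]
theorem sub {f g : E → F} (hf : IsPolyMap K f) (hg : IsPolyMap K g) :
    IsPolyMap K fun x => f x - g x :=
  Submodule.sub_mem _ hf hg

@[fun_prop]
theorem id [Module.Finite K E] [Module.Free K E] : IsPolyMap K fun x : E => x := by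
  let b := Module.Free.chooseBasis K E
  have h : IsPolyMap K fun x => ∑ i, b.coord i x • b i :=
    sum fun i => smul_of_mem_polyFun (Algebra.subset_adjoin ⟨b.coord i, rfl⟩) (const _)
  simpa only [Module.Basis.coord_apply, b.sum_repr] using h

@[fun_prop]
theorem comp {g : F → G} {f : E → F} (hg : IsPolyMap K g) (hf : IsPolyMap K f) :
    IsPolyMap K fun x => g (f x) := by
  refine hg.induction (p := fun g => IsPolyMap K fun x => g (f x)) (fun a ha v => ?_)
    fun _ _ => add
  refine smul ?_ (const v)
  induction ha using Algebra.adjoin_induction with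
  | mem _ h =>
    obtain ⟨φ, rfl⟩ := h
    exact linearMap_comp φ hf
  | algebraMap r => exact const r
  | add _ _ _ _ h₁ h₂ => exact h₁.add h₂
  | mul _ _ _ _ h₁ h₂ => exact h₁.mul h₂

@[fun_prop]
theorem fst {f : E → F × G} (hf : IsPolyMap K f) : IsPolyMap K fun x => (f x).1 :=
  linearMap_comp (LinearMap.fst K F G) hf

@[fun_prop]
theorem snd {f : E → F × G} (hf : IsPolyMap K f) : IsPolyMap K fun x => (f x).2 :=
  linearMap_comp (LinearMap.snd K F G) hf

@[fun_prop]
theorem prodMk {f : E → F} {g : E → G} (hf : IsPolyMap K f) (hg : IsPolyMap K g) :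
    IsPolyMap K fun x => (f x, g x) := by
  simpa using
    (linearMap_comp (LinearMap.inl K F G) hf).add (linearMap_comp (LinearMap.inr K F G) hg)

@[fun_prop]
theorem apply [Module.Finite K F] [Module.Free K F] {ι : Type*} [Finite ι] (i : ι) :
    IsPolyMap K fun f : ι → F => f i :=
  linearMap_comp (LinearMap.proj (φ := fun _ => F) i) id

@[fun_prop]
theorem pi {ι : Type*} [Finite ι] {f : E → ι → F} (hf : ∀ i, IsPolyMap K fun x => f x i) :
    IsPolyMap K f := by
  classical
  have := Fintype.ofFinite ι
  have h := sum (s := .univ) fun i => linearMap_comp (LinearMap.single K (fun _ => F) i) (hf i)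
  simpa only [LinearMap.coe_single, Finset.univ_sum_single] using h

theorem aeval {σ A : Type*} [CommRing A] [Algebra K A] {p : E → MvPolynomial σ K}
    {y : E → σ → A} (hp : IsPolyMap K p) (hy : ∀ i, IsPolyMap K fun x => y x i) :
    IsPolyMap K fun x => MvPolynomial.aeval (y x) (p x) := by
  refine hp.induction (p := fun p => IsPolyMap K fun x => MvPolynomial.aeval (y x) (p x))
    (fun a ha q => ?_) fun f g hf hg => by simpa only [map_add] using hf.add hg
  simp only [map_smul]
  refine smul (of_mem_polyFun ha) ?_
  induction q using MvPolynomial.induction_on with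
  | C a => simpa only [algHom_C] using const _
  | add p q hp hq => simpa only [map_add] using hp.add hq
  | mul_X p i hp => simpa only [map_mul, aeval_X] using hp.mul (hy i)

end IsPolyMap

end PolynomialMaps

section Constructible

variable (K : Type*) [Field K] {E F G : Type*} [AddCommGroup E] [Module K E] [AddCommGroup F]
  [Module K F] [AddCommGroup G] [Module K G]

/-- Constructible subsets of a vector space, written as predicates: the Boolean combinations of
polynomial equations. Predicates rather than sets let the constructibility of a formula be read off
its logical structure. -/
def IsConstructiblePred (P : E → Prop) : Prop :=
  P ∈ BooleanSubalgebra.closure {Q : E → Prop | ∃ f ∈ polyFun K E, Q = fun x => f x = 0}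

namespace IsConstructiblePred

variable {K} {P Q : E → Prop}

theorem eq_zero {f : E → K} (hf : IsPolyMap K f) : IsConstructiblePred K fun x => f x = 0 :=
  BooleanSubalgebra.subset_closure ⟨f, hf.mem_polyFun, rfl⟩

theorem not (hP : IsConstructiblePred K P) : IsConstructiblePred K fun x => ¬P x :=
  BooleanSubalgebra.compl_mem hP

theorem and (hP : IsConstructiblePred K P) (hQ : IsConstructiblePred K Q) :
    IsConstructiblePred K fun x => P x ∧ Q x :=
  BooleanSubalgebra.inf_mem hP hQ

theorem or (hP : IsConstructiblePred K P) (hQ : IsConstructiblePred K Q) :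
    IsConstructiblePred K fun x => P x ∨ Q x :=
  BooleanSubalgebra.sup_mem hP hQ

theorem imp (hP : IsConstructiblePred K P) (hQ : IsConstructiblePred K Q) :
    IsConstructiblePred K fun x => P x → Q x := by
  simpa only [imp_iff_not_or] using hP.not.or hQ

theorem iff (hP : IsConstructiblePred K P) (hQ : IsConstructiblePred K Q) :
    IsConstructiblePred K fun x => P x ↔ Q x := by
  simpa only [iff_def] using (hP.imp hQ).and (hQ.imp hP)

theorem const (p : Prop) : IsConstructiblePred K fun _ : E => p := by
  by_cases h : p
  · simp only [h]; exact BooleanSubalgebra.top_mem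
  · simp only [h]; exact BooleanSubalgebra.bot_mem

theorem finite_exists {ι : Type*} [Finite ι] {P : ι → E → Prop}
    (hP : ∀ i, IsConstructiblePred K (P i)) : IsConstructiblePred K fun x => ∃ i, P i x := by
  have h : (⨆ i, P i) = fun x => ∃ i, P i x := by
    ext x
    simp only [iSup_apply, iSup_Prop_eq]
  exact h ▸ BooleanSubalgebra.iSup_mem hP

theorem finite_forall {ι : Type*} [Finite ι] {P : ι → E → Prop}
    (hP : ∀ i, IsConstructiblePred K (P i)) : IsConstructiblePred K fun x => ∀ i, P i x := by
  simpa only [not_exists, not_not] using (finite_exists fun i => (hP i).not).not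

theorem eq [FiniteDimensional K F] {f g : E → F} (hf : IsPolyMap K f) (hg : IsPolyMap K g) :
    IsConstructiblePred K fun x => f x = g x := by
  let b := Module.finBasis K F
  simpa only [← b.ext_elem_iff, map_sub, sub_eq_zero, Module.Basis.coord_apply, Finsupp.sub_apply]
    using finite_forall fun i => eq_zero ((hf.sub hg).linearMap_comp (b.coord i))

theorem comp {P : F → Prop} (hP : IsConstructiblePred K P) {f : E → F} (hf : IsPolyMap K f) :
    IsConstructiblePred K fun x => P (f x) := by
  induction hP using BooleanSubalgebra.closure_bot_sup_induction with
  | mem P hP =>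
    obtain ⟨g, hg, rfl⟩ := hP
    exact eq_zero ((IsPolyMap.of_mem_polyFun hg).comp hf)
  | bot => exact const False
  | sup _ _ _ _ hP hQ => exact hP.or hQ
  | compl _ _ hP => exact hP.not

end IsConstructiblePred

theorem exists_isClosed_singleton_of_isConstructible {X : Type*} [TopologicalSpace X]
    [JacobsonSpace X] {T Z : Set X} (hT : Topology.IsConstructible T) (hZ : IsClosed Z)
    (h : (T ∩ Z).Nonempty) : ∃ x ∈ T ∩ Z, IsClosed {x} := by
  induction T, hT using BooleanSubalgebra.closure_sdiff_sup_induction with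
  | isSublattice =>
    exact ⟨fun _ hU _ hV => ⟨hU.1.union hV.1, hU.2.union hV.2⟩,
      fun _ hU _ hV => ⟨hU.1.inter hV.1, hU.2.inter_isOpen hV.2 hV.1⟩⟩
  | bot_mem => exact ⟨isOpen_empty, .empty⟩
  | top_mem => exact ⟨isOpen_univ, .univ⟩
  | sdiff U hU V hV =>
    exact nonempty_inter_closedPoints h
      ((hU.1.isLocallyClosed.inter hV.1.isClosed_compl.isLocallyClosed).inter hZ.isLocallyClosed)
  | sup _ _ _ _ ihS ihT =>
    obtain ⟨x, hx | hx, hxZ⟩ := h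
    · obtain ⟨y, hy, hy'⟩ := ihS ⟨x, hx, hxZ⟩
      exact ⟨y, ⟨.inl hy.1, hy.2⟩, hy'⟩
    · obtain ⟨y, hy, hy'⟩ := ihT ⟨x, hx, hxZ⟩
      exact ⟨y, ⟨.inr hy.1, hy.2⟩, hy'⟩

/-- The point of the spectrum of the coordinate ring given by evaluation at `x`. -/
def evalPoint (x : E) : PrimeSpectrum (polyFun K E) :=
  ⟨RingHom.ker ((Pi.evalRingHom _ x).comp (polyFun K E).val.toRingHom), RingHom.ker_isPrime _⟩

variable {K}

theorem mem_evalPoint {x : E} {f : polyFun K E} :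
    f ∈ (evalPoint K x).asIdeal ↔ (f : E → K) x = 0 :=
  Iff.rfl

theorem evalPoint_injective : Function.Injective (evalPoint K : E → _) := by
  intro x y h
  refine sub_eq_zero.1 ((Module.forall_dual_apply_eq_zero_iff K (x - y)).1 fun φ => ?_)
  have hφ : (fun z => φ z - φ y) ∈ polyFun K E :=
    sub_mem (Algebra.subset_adjoin ⟨φ, rfl⟩) (algebraMap_mem _ (φ y))
  have hy : (⟨_, hφ⟩ : polyFun K E) ∈ (evalPoint K y).asIdeal := mem_evalPoint.2 (sub_self _)
  rw [← h] at hy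
  simpa only [map_sub] using mem_evalPoint.1 hy

theorem isClosed_singleton_evalPoint (x : E) : IsClosed {evalPoint K x} := by
  rw [PrimeSpectrum.isClosed_singleton_iff_isMaximal]
  exact RingHom.ker_isMaximal_of_surjective _ fun a => ⟨algebraMap K _ a, rfl⟩

section

variable [FiniteDimensional K E]

instance : Algebra.FiniteType K (polyFun K E) := by
  obtain ⟨t, ht⟩ := Module.Finite.iff_fg.1
    (inferInstance : Module.Finite K (LinearMap.range (LinearMap.ltoFun K E K K)))
  refine (polyFun K E).fg_iff_finiteType.1 ⟨t, ?_⟩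
  rw [← Algebra.adjoin_span, ht, polyFun]
  rfl

instance : IsNoetherianRing (polyFun K E) :=
  Algebra.FiniteType.isNoetherianRing K _

theorem exists_eq_evalPoint_of_isClosed_singleton [IsAlgClosed K]
    {p : PrimeSpectrum (polyFun K E)} (hp : IsClosed {p}) : ∃ x, p = evalPoint K x := by
  have : p.asIdeal.IsMaximal := (PrimeSpectrum.isClosed_singleton_iff_isMaximal p).1 hp
  let := Ideal.Quotient.field p.asIdeal
  have : Module.Finite K (polyFun K E ⧸ p.asIdeal) := finite_of_finite_type_of_isJacobsonRing K _
  have : Algebra.IsIntegral K (polyFun K E ⧸ p.asIdeal) := .of_finite K _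
  let e : K ≃ₐ[K] polyFun K E ⧸ p.asIdeal :=
    .ofBijective (Algebra.ofId _ _) IsAlgClosed.algebraMap_bijective_of_isIntegral
  let χ : polyFun K E →ₐ[K] K := e.symm.toAlgHom.comp (Ideal.Quotient.mkₐ K p.asIdeal)
  let ξ : Module.Dual K (Module.Dual K E) :=
    χ.toLinearMap ∘ₗ (LinearMap.ltoFun K E K K).codRestrict (polyFun K E).toSubmodule
      fun φ => Algebra.subset_adjoin ⟨φ, rfl⟩
  let x : E := (Module.evalEquiv K E).symm ξ
  have hχ : χ = (Pi.evalAlgHom K _ x).comp (polyFun K E).val := by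
    refine AlgHom.adjoin_ext ?_
    rintro _ ⟨φ, rfl⟩
    exact (Module.apply_evalEquiv_symm_apply K E φ ξ).symm
  refine ⟨x, PrimeSpectrum.ext (Ideal.ext fun f => ?_)⟩
  have hf : χ f = 0 ↔ f ∈ p.asIdeal := by
    simp [χ, Ideal.Quotient.eq_zero_iff_mem]
  rw [← hf, hχ]
  rfl

end

theorem IsConstructiblePred.exists_isConstructible {P : E → Prop} (hP : IsConstructiblePred K P) :
    ∃ T : Set (PrimeSpectrum (polyFun K E)),
      Topology.IsConstructible T ∧ ∀ x, P x ↔ evalPoint K x ∈ T := by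
  induction hP using BooleanSubalgebra.closure_bot_sup_induction with
  | mem P hP =>
    obtain ⟨f, hf, rfl⟩ := hP
    exact ⟨(PrimeSpectrum.basicOpen (⟨f, hf⟩ : polyFun K E) : Set _)ᶜ,
      PrimeSpectrum.isConstructible_basicOpen.compl, fun x => (not_not (a := f x = 0)).symm⟩
  | bot => exact ⟨∅, .empty, fun x => Iff.rfl⟩
  | sup P _ Q _ hP hQ =>
    obtain ⟨S, hS, hPS⟩ := hP
    obtain ⟨T, hT, hQT⟩ := hQ
    exact ⟨S ∪ T, hS.union hT, fun x => or_congr (hPS x) (hQT x)⟩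
  | compl P _ hP =>
    obtain ⟨S, hS, hPS⟩ := hP
    exact ⟨Sᶜ, hS.compl, fun x => not_congr (hPS x)⟩

theorem IsConstructiblePred.evalPoint_mem {T : Set (PrimeSpectrum (polyFun K E))}
    (hT : Topology.IsConstructible T) : IsConstructiblePred K fun x => evalPoint K x ∈ T := by
  obtain ⟨S, rfl⟩ := PrimeSpectrum.exists_constructibleSetData_iff.2 hT
  have hS : ∀ D : S, IsConstructiblePred K fun x : E =>
      (∀ i, D.1.g i ∈ (evalPoint K x).asIdeal) ∧ D.1.f ∉ (evalPoint K x).asIdeal := fun D =>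
    (finite_forall fun i => eq_zero (.of_mem_polyFun (D.1.g i).2)).and
      (eq_zero (.of_mem_polyFun D.1.f.2)).not
  convert finite_exists hS with x
  simp [PrimeSpectrum.ConstructibleSetData.toSet, PrimeSpectrum.BasicConstructibleSetData.toSet,
    PrimeSpectrum.mem_zeroLocus, Set.range_subset_iff]

/-- The homomorphism of coordinate rings induced by a polynomial map. -/
def pullback {f : E → F} (hf : IsPolyMap K f) : polyFun K F →ₐ[K] polyFun K E where
  toFun g := ⟨fun x => g.1 (f x), ((IsPolyMap.of_mem_polyFun g.2).comp hf).mem_polyFun⟩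
  map_one' := rfl
  map_mul' _ _ := rfl
  map_zero' := rfl
  map_add' _ _ := rfl
  commutes' _ := rfl

theorem comap_pullback_evalPoint {f : E → F} (hf : IsPolyMap K f) (x : E) :
    PrimeSpectrum.comap (pullback hf : polyFun K F →+* polyFun K E) (evalPoint K x) =
      evalPoint K (f x) :=
  rfl

variable [IsAlgClosed K] [FiniteDimensional K E] [FiniteDimensional K F]

theorem IsConstructiblePred.image {P : E → Prop} (hP : IsConstructiblePred K P) {f : E → F}
    (hf : IsPolyMap K f) :
    IsConstructiblePred K fun y => ∃ x, P x ∧ f x = y := by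
  obtain ⟨T, hT, hPT⟩ := hP.exists_isConstructible
  let φ : polyFun K F →+* polyFun K E := pullback hf
  have hφ : φ.FinitePresentation := RingHom.FinitePresentation.of_finiteType.1
    (RingHom.FiniteType.of_comp_finiteType (f := algebraMap K (polyFun K F)) (by
      rw [(pullback hf).comp_algebraMap, RingHom.finiteType_algebraMap]
      infer_instance))
  have : JacobsonSpace (PrimeSpectrum (polyFun K E)) :=
    PrimeSpectrum.isJacobsonRing_iff_jacobsonSpace.1 (isJacobsonRing_of_finiteType (A := K))
  convert evalPoint_mem (PrimeSpectrum.isConstructible_comap_image hφ hT) with y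
  constructor
  · rintro ⟨x, hx, rfl⟩
    exact ⟨_, (hPT x).1 hx, comap_pullback_evalPoint hf x⟩
  · rintro ⟨p, hpT, hpy⟩
    obtain ⟨q, ⟨hqT, hqy⟩, hq⟩ := exists_isClosed_singleton_of_isConstructible hT
      ((isClosed_singleton_evalPoint y).preimage (PrimeSpectrum.continuous_comap φ)) ⟨p, hpT, hpy⟩
    obtain ⟨x, rfl⟩ := exists_eq_evalPoint_of_isClosed_singleton hq
    exact ⟨x, (hPT x).2 hqT, evalPoint_injective hqy⟩

theorem IsConstructiblePred.exists {P : E → F → Prop}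
    (hP : IsConstructiblePred K fun z : E × F => P z.1 z.2) :
    IsConstructiblePred K fun x => ∃ y, P x y := by
  simpa using hP.image (f := Prod.fst) (by fun_prop)

theorem IsConstructiblePred.forall {P : E → F → Prop}
    (hP : IsConstructiblePred K fun z : E × F => P z.1 z.2) :
    IsConstructiblePred K fun x => ∀ y, P x y := by
  simpa only [not_exists, not_not] using
    (IsConstructiblePred.exists (P := fun x y => ¬P x y) hP.not).not

end Constructible

section Zariski

theorem ZClosed.union {σ : Type*} {S T : Set (σ → ℂ)} (hS : ZClosed S) (hT : ZClosed T) :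
    ZClosed (S ∪ T) := by
  obtain ⟨I, rfl⟩ := hS
  obtain ⟨J, rfl⟩ := hT
  refine ⟨image2 (· * ·) I J, ext fun x => ?_⟩
  simp only [mem_union, mem_ofPred_eq, forall_mem_image2, map_mul, mul_eq_zero]
  grind

theorem ZClosed.inter {σ : Type*} {S T : Set (σ → ℂ)} (hS : ZClosed S) (hT : ZClosed T) :
    ZClosed (S ∩ T) := by
  obtain ⟨I, rfl⟩ := hS
  obtain ⟨J, rfl⟩ := hT
  refine ⟨I ∪ J, ext fun x => ?_⟩
  simp only [mem_union, mem_inter_iff, mem_ofPred_eq, or_imp, forall_and]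

theorem IsConstructibleC.union {σ : Type*} {S T : Set (σ → ℂ)} (hS : IsConstructibleC S)
    (hT : IsConstructibleC T) : IsConstructibleC (S ∪ T) := by
  obtain ⟨k, U, Z, hU, hZ, rfl⟩ := hS
  obtain ⟨l, V, W, hV, hW, rfl⟩ := hT
  refine ⟨k + l, Fin.append U V, Fin.append Z W, ?_, ?_, ?_⟩
  · exact Fin.addCases (by simpa using hU) (by simpa using hV)
  · exact Fin.addCases (by simpa using hZ) (by simpa using hW)
  · rw [← finSumFinEquiv.surjective.iUnion_comp, iUnion_sum]
    simp

theorem exists_eval_eq_of_mem_polyFun {K σ : Type*} [CommRing K] [Finite σ] {f : (σ → K) → K}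
    (hf : f ∈ polyFun K (σ → K)) : ∃ q : MvPolynomial σ K, f = fun x => eval x q := by
  classical
  have := Fintype.ofFinite σ
  induction hf using Algebra.adjoin_induction with
  | mem _ h =>
    obtain ⟨φ, rfl⟩ := h
    refine ⟨∑ i, C (φ fun j => if i = j then 1 else 0) * X i, funext fun x => ?_⟩
    simpa [mul_comm] using φ.pi_apply_eq_sum_univ x
  | algebraMap a => exact ⟨C a, by ext; simp⟩
  | add _ _ _ _ hf hg =>
    obtain ⟨p, rfl⟩ := hf
    obtain ⟨q, rfl⟩ := hg
    exact ⟨p + q, by ext; simp⟩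
  | mul _ _ _ _ hf hg =>
    obtain ⟨p, rfl⟩ := hf
    obtain ⟨q, rfl⟩ := hg
    exact ⟨p * q, by ext; simp⟩

theorem IsConstructiblePred.isConstructibleC {σ : Type*} [Finite σ] {P : (σ → ℂ) → Prop}
    (hP : IsConstructiblePred ℂ P) : IsConstructibleC {x | P x} := by
  let L : Set ((σ → ℂ) → Prop) := {P | ZClosed {x | P x}}
  have hPL : P ∈ BooleanSubalgebra.closure L := by
    refine BooleanSubalgebra.closure_mono ?_ hP
    rintro _ ⟨f, hf, rfl⟩
    obtain ⟨q, rfl⟩ := exists_eval_eq_of_mem_polyFun hf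
    exact ⟨{q}, by simp⟩
  clear hP
  induction P, hPL using BooleanSubalgebra.closure_sdiff_sup_induction with
  | isSublattice => exact ⟨fun _ hP _ hQ => hP.union hQ, fun _ hP _ hQ => hP.inter hQ⟩
  | bot_mem => exact ⟨{1}, by simp⟩
  | top_mem => exact ⟨∅, by simp⟩
  | sdiff P hP Q hQ =>
    refine ⟨1, fun _ => {x | Q x}ᶜ, fun _ => {x | P x}, fun _ => ?_, fun _ => hP, ?_⟩
    · rwa [compl_compl]
    · rw [iUnion_const, inter_comm]
      rfl
  | sup P _ Q _ hP hQ => exact hP.union hQ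

end Zariski

section Rank

variable {K ι κ : Type*} [Field K] [Fintype κ]

theorem le_rank_iff_exists_linearIndependent_mulVec {M : Matrix ι κ K} {r : ℕ} :
    r ≤ M.rank ↔ ∃ v : Fin r → κ → K, LinearIndependent K fun t => M.mulVec (v t) := by
  constructor
  · intro h
    have hr : (r : Cardinal) ≤ Module.rank K M.mulVecLin.range := by
      rw [← Module.finrank_eq_rank]
      exact_mod_cast h
    obtain ⟨w, hw⟩ := Module.le_rank_iff.1 hr
    choose v hv using fun t => (w t).2
    exact ⟨v, (funext hv : (fun t => M.mulVec (v t)) = _) ▸ hw.map' _ (Submodule.ker_subtype _)⟩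
  · rintro ⟨v, hv⟩
    have hw : LinearIndependent K fun t => (⟨_, v t, rfl⟩ : M.mulVecLin.range) :=
      hv.of_comp (Submodule.subtype _)
    simpa [Matrix.rank] using hw.fintype_card_le_finrank

variable {E : Type*} [AddCommGroup E] [Module K E] [FiniteDimensional K E] [IsAlgClosed K]
  [Finite ι] {M : E → Matrix ι κ K}

theorem IsConstructiblePred.le_rank (hM : ∀ i j, IsPolyMap K fun x => M x i j) (r : ℕ) :
    IsConstructiblePred K fun x => r ≤ (M x).rank := by
  simp only [le_rank_iff_exists_linearIndependent_mulVec, Fintype.linearIndependent_iff]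
  have hMv (t : Fin r) : IsPolyMap K fun z : (E × (Fin r → κ → K)) × (Fin r → K) =>
      (M z.1.1).mulVec (z.1.2 t) :=
    .pi fun i => .sum fun j => .mul ((hM i j).comp (by fun_prop)) (by fun_prop)
  exact .exists (.forall (.imp (.eq (by fun_prop) (.const 0))
    (finite_forall fun t => .eq_zero (by fun_prop))))

theorem IsConstructiblePred.rank_add_eq (hM : ∀ i j, IsPolyMap K fun x => M x i j) (a b : ℕ) :
    IsConstructiblePred K fun x => (M x).rank + a = b := by
  convert (le_rank hM (b - a)).and (le_rank hM (b + 1 - a)).not with x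
  omega

end Rank

section Cardinality

variable {α : Type*} {S : Set α}

theorem encard_eq_iff_exists_range_eq {k : ℕ} :
    S.encard = k ↔ ∃ y : Fin k → α, Function.Injective y ∧ range y = S := by
  constructor
  · intro h
    have := (finite_of_encard_eq_coe h).to_subtype
    have hS : Nat.card S = k := by
      rw [Nat.card_coe_set_eq, ncard_def, h, ENat.toNat_natCast]
    let e := Finite.equivFinOfCardEq hS
    exact ⟨_, Subtype.val_injective.comp e.symm.injective,
      (e.symm.surjective.range_comp _).trans Subtype.range_coe⟩
  · rintro ⟨y, hy, rfl⟩
    rw [← image_univ, hy.encard_image, encard_univ, ENat.card_eq_coe_fintype_card,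
      Fintype.card_fin]

theorem finsum_mem_range_fin {M : Type*} [AddCommMonoid M] {r : ℕ} {y : Fin r → α}
    (hy : Function.Injective y) (w : α → M) : ∑ᶠ a ∈ range y, w a = ∑ t, w (y t) := by
  rw [finsum_mem_range hy, finsum_eq_sum_of_fintype]

theorem finite_and_finsum_mem_eq_iff {w : α → ℕ} (hw : S.Finite → ∀ a ∈ S, 0 < w a) {m : ℕ} :
    S.Finite ∧ ∑ᶠ a ∈ S, w a = m ↔
      ∃ (r : Fin (m + 1)) (ν : Fin r → Fin (m + 1)), ∑ t, (ν t : ℕ) = m ∧ ∃ y : Fin r → α,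
        (Function.Injective y ∧ range y = S) ∧ ∀ t, w (y t) = ν t := by
  constructor
  · rintro ⟨hS, hm⟩
    obtain ⟨r, hr⟩ := hS.exists_encard_eq_coe
    obtain ⟨y, hy, rfl⟩ := encard_eq_iff_exists_range_eq.1 hr
    rw [finsum_mem_range_fin hy] at hm
    have hle (t : Fin r) : w (y t) ≤ m :=
      (Finset.single_le_sum_of_canonicallyOrdered (f := fun t => w (y t))
        (Finset.mem_univ t)).trans_eq hm
    have hrm : r ≤ m := by
      calc r = ∑ _t : Fin r, 1 := by simp
        _ ≤ ∑ t, w (y t) := Finset.sum_le_sum fun t _ => hw hS _ ⟨t, rfl⟩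
        _ = m := hm
    exact ⟨⟨r, Nat.lt_succ_of_le hrm⟩, fun t => ⟨w (y t), Nat.lt_succ_of_le (hle t)⟩, hm, y,
      ⟨hy, rfl⟩, fun _ => rfl⟩
  · rintro ⟨r, ν, hν, y, ⟨hy, rfl⟩, hyν⟩
    refine ⟨finite_range y, ?_⟩
    simp only [finsum_mem_range_fin hy, hyν, hν]

variable {K E F : Type*} [Field K] [IsAlgClosed K] [AddCommGroup E] [Module K E]
  [FiniteDimensional K E] [AddCommGroup F] [Module K F] [FiniteDimensional K F]
  {Q : E → F → Prop}

theorem IsConstructiblePred.injective_and_range_eq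
    (hQ : IsConstructiblePred K fun z : E × F => Q z.1 z.2) (r : ℕ) :
    IsConstructiblePred K fun z : E × (Fin r → F) =>
      Function.Injective z.2 ∧ range z.2 = {q | Q z.1 q} := by
  simp only [Function.Injective, Set.ext_iff, mem_range, mem_ofPred_eq]
  refine .and (finite_forall fun s => finite_forall fun t => .imp (.eq ?_ ?_) (.const _))
    (.forall (.iff (finite_exists fun t => .eq ?_ ?_)
      (hQ.comp (f := fun z : (E × (Fin r → F)) × F => (z.1.1, z.2)) ?_)))
  all_goals fun_prop

theorem IsConstructiblePred.encard_eq
    (hQ : IsConstructiblePred K fun z : E × F => Q z.1 z.2) (k : ℕ) :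
    IsConstructiblePred K fun x => {q | Q x q}.encard = k := by
  simp only [encard_eq_iff_exists_range_eq]
  exact .exists (hQ.injective_and_range_eq k)

end Cardinality

section LocalAlgebra

variable {K R : Type*} [Field K] [CommRing R] [Algebra K R] {J J' I : Ideal R}

theorem finrank_quotient_le [Module.Finite K (R ⧸ J)] (h : J ≤ J') :
    Module.finrank K (R ⧸ J') ≤ Module.finrank K (R ⧸ J) :=
  LinearMap.finrank_le_finrank_of_surjective (f := (Ideal.Quotient.factorₐ K h).toLinearMap)
    (Ideal.Quotient.factor_surjective h)

theorem eq_of_finrank_quotient_eq [Module.Finite K (R ⧸ J)] (h : J ≤ J')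
    (hr : Module.finrank K (R ⧸ J) = Module.finrank K (R ⧸ J')) : J = J' := by
  have := Module.Finite.of_surjective (Ideal.Quotient.factorₐ K h).toLinearMap
    (Ideal.Quotient.factor_surjective h)
  have hinj := (LinearMap.injective_iff_surjective_of_finrank_eq_finrank hr
    (f := (Ideal.Quotient.factorₐ K h).toLinearMap)).2 (Ideal.Quotient.factor_surjective h)
  refine h.antisymm fun x hx => ?_
  rw [← Ideal.Quotient.eq_zero_iff_mem] at hx ⊢
  exact hinj (hx.trans (map_zero _).symm)

theorem sup_pow_eq_or_le_finrank [Module.Finite K (R ⧸ J)] (hI : I.FG)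
    (hjac : I ≤ (⊥ : Ideal R).jacobson) (i : ℕ) :
    J ⊔ I ^ i = J ∨ i ≤ Module.finrank K (R ⧸ J ⊔ I ^ i) := by
  induction i with
  | zero => exact .inr (Nat.zero_le _)
  | succ i ih =>
    have hpow : I ^ (i + 1) ≤ I ^ i := Ideal.pow_le_pow_right i.le_succ
    have hle : J ⊔ I ^ (i + 1) ≤ J ⊔ I ^ i := sup_le_sup_left hpow J
    have : Module.Finite K (R ⧸ J ⊔ I ^ (i + 1)) := Module.Finite.of_surjective
      (Ideal.Quotient.factorₐ K le_sup_left).toLinearMap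
      (Ideal.Quotient.factor_surjective le_sup_left)
    rcases ih with ih | ih
    · exact .inl (sup_eq_left.2 (hpow.trans (sup_eq_left.1 ih)))
    rcases (finrank_quotient_le (K := K) hle).lt_or_eq with hlt | heq
    · exact .inr (ih.trans_lt hlt)
    · have hN : I ^ i ≤ J ⊔ I • I ^ i := by
        rw [smul_eq_mul, ← pow_succ', eq_of_finrank_quotient_eq hle heq.symm]
        exact le_sup_right
      have hJ : I ^ i ≤ J := Submodule.le_of_le_smul_of_le_jacobson_bot hI.pow hjac hN
      exact .inl (sup_eq_left.2 (hpow.trans hJ))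

theorem finrank_quotient_eq_iff_sup_pow [Module.Finite K (R ⧸ J)] (hI : I.FG)
    (hjac : I ≤ (⊥ : Ideal R).jacobson) (ν : ℕ) :
    Module.finrank K (R ⧸ J) = ν ↔ Module.finrank K (R ⧸ J ⊔ I ^ (ν + 1)) = ν := by
  rcases sup_pow_eq_or_le_finrank (K := K) (J := J) hI hjac (ν + 1) with h | h
  · rw [h]
  · have := h.trans (finrank_quotient_le le_sup_left)
    omega

end LocalAlgebra

section PowerSeries

open IsLocalRing (maximalIdeal)

theorem mem_span_monomial_of_forall_exists_le {σ R : Type*} [CommSemiring R] {S : Set (σ →₀ ℕ)}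
    (hS : S.Finite) {g : MvPowerSeries σ R}
    (hg : ∀ d, MvPowerSeries.coeff d g ≠ 0 → ∃ e ∈ S, e ≤ d) :
    g ∈ Ideal.span ((fun e => MvPowerSeries.monomial e (1 : R)) '' S) := by
  classical
  choose! c hcS hc using hg
  let q (e : σ →₀ ℕ) : MvPowerSeries σ R := fun d =>
    if c (d + e) = e then MvPowerSeries.coeff (d + e) g else 0
  have hq : ∑ e ∈ hS.toFinset, q e * MvPowerSeries.monomial e 1 = g := by
    ext d
    have hterm (e : σ →₀ ℕ) :
        MvPowerSeries.coeff d (q e * MvPowerSeries.monomial e 1) =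
          if e ≤ d ∧ c d = e then MvPowerSeries.coeff d g else 0 := by
      rw [MvPowerSeries.coeff_mul_monomial, ite_and]
      refine ite_congr rfl (fun hed => ?_) fun _ => rfl
      change (if c (d - e + e) = e then MvPowerSeries.coeff (d - e + e) g else 0) * 1 = _
      rw [mul_one, tsub_add_cancel_of_le hed]
    by_cases hd : MvPowerSeries.coeff d g = 0
    · simp [hterm, hd]
    · rw [map_sum, Finset.sum_eq_single_of_mem (c d) (hS.mem_toFinset.2 (hcS d hd))]
      · rw [hterm, if_pos ⟨hc d hd, rfl⟩]
      · rintro e - he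
        rw [hterm, if_neg fun h => he h.2.symm]
  rw [← hq]
  exact sum_mem fun e he => Ideal.mul_mem_left _ _
    (Ideal.subset_span ⟨e, hS.mem_toFinset.1 he, rfl⟩)

variable {σ K : Type*} [Field K]

theorem mem_maximalIdeal_iff_constantCoeff {g : MvPowerSeries σ K} :
    g ∈ maximalIdeal (MvPowerSeries σ K) ↔ MvPowerSeries.constantCoeff g = 0 := by
  rw [IsLocalRing.mem_maximalIdeal, mem_nonunits_iff, MvPowerSeries.isUnit_iff_constantCoeff,
    isUnit_iff_ne_zero, not_not]

theorem monomial_mem_maximalIdeal_pow (e : σ →₀ ℕ) :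
    MvPowerSeries.monomial e (1 : K) ∈ maximalIdeal (MvPowerSeries σ K) ^ e.degree := by
  induction e using Finsupp.induction_linear with
  | zero => simp
  | add e e' he he' =>
    rw [← mul_one (1 : K), ← MvPowerSeries.monomial_mul_monomial, map_add, pow_add]
    exact Ideal.mul_mem_mul he he'
  | single i n =>
    rw [← MvPowerSeries.X_pow_eq, Finsupp.degree_single]
    exact Ideal.pow_mem_pow
      (mem_maximalIdeal_iff_constantCoeff.2 (MvPowerSeries.constantCoeff_X i)) n

theorem le_order_of_mem_maximalIdeal_pow {g : MvPowerSeries σ K} {N : ℕ}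
    (hg : g ∈ maximalIdeal (MvPowerSeries σ K) ^ N) : N ≤ g.order := by
  induction N generalizing g with
  | zero => simp
  | succ N ih =>
    rw [pow_succ] at hg
    induction hg using Submodule.mul_induction_on' with
    | mem_mul_mem a ha b hb =>
      have hb' : 1 ≤ b.order := MvPowerSeries.one_le_order_iff_constCoeff_eq_zero.2
        (mem_maximalIdeal_iff_constantCoeff.1 hb)
      rw [Nat.cast_succ]
      exact (add_le_add (ih ha) hb').trans MvPowerSeries.le_order_mul
    | add a _ b _ ha hb => exact (le_min ha hb).trans MvPowerSeries.min_order_le_add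

theorem mem_maximalIdeal_pow_iff [Finite σ] {g : MvPowerSeries σ K} {N : ℕ} :
    g ∈ maximalIdeal (MvPowerSeries σ K) ^ N ↔
      ∀ d : σ →₀ ℕ, d.degree < N → MvPowerSeries.coeff d g = 0 := by
  constructor
  · intro hg d hd
    exact MvPowerSeries.coeff_of_lt_order
      ((Nat.cast_lt.2 hd).trans_le (le_order_of_mem_maximalIdeal_pow hg))
  · intro hg
    refine Ideal.span_le.2 ?_ (mem_span_monomial_of_forall_exists_le
      (Finsupp.finite_of_degree_eq N) fun d hd => ?_)
    · rintro _ ⟨e, rfl, rfl⟩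
      exact monomial_mem_maximalIdeal_pow e
    · obtain ⟨e, hed, he⟩ := d.exists_le_degree_eq N (not_lt.1 (mt (hg d) hd))
      exact ⟨e, he, hed⟩

end PowerSeries

section Macaulay

open IsLocalRing (maximalIdeal)

variable {σ R ι : Type*} [Semiring R]

/-- The coefficients of degree `< N` of a power series. -/
def truncCoeffs (σ R : Type*) [Semiring R] (N : ℕ) :
    MvPowerSeries σ R →ₗ[R] {e : σ →₀ ℕ // e.degree < N} → R :=
  .pi fun e => MvPowerSeries.coeff e.1

theorem truncCoeffs_surjective (N : ℕ) : Function.Surjective (truncCoeffs σ R N) := by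
  classical
  intro v
  exact ⟨fun e => if he : e.degree < N then v ⟨e, he⟩ else 0, funext fun e => dif_pos e.2⟩

/-- The Macaulay matrix in degrees below `N`: its columns list the coefficients of degree `< N` of
the products of the series `h i` with the monomials of degree `< N`, which span the ideal generated
by `h` modulo the `N`-th power of the maximal ideal. -/
def macaulayMatrix (N : ℕ) (h : ι → MvPowerSeries σ R) :
    Matrix {e : σ →₀ ℕ // e.degree < N} ({e : σ →₀ ℕ // e.degree < N} × ι) R :=
  .of fun e a => MvPowerSeries.coeff e.1 (MvPowerSeries.monomial a.1.1 1 * h a.2)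

variable {K : Type*} [Field K] [Finite σ]

instance (N : ℕ) : Fintype {e : σ →₀ ℕ // e.degree < N} :=
  (Finsupp.finite_of_degree_lt N).fintype

theorem ker_truncCoeffs (N : ℕ) : LinearMap.ker (truncCoeffs σ K N) =
    (maximalIdeal (MvPowerSeries σ K) ^ N).restrictScalars K := by
  ext g
  rw [LinearMap.mem_ker, Submodule.restrictScalars_mem, mem_maximalIdeal_pow_iff, funext_iff,
    Subtype.forall]
  rfl

theorem truncCoeffs_mul (N : ℕ) (g h : MvPowerSeries σ K) :
    truncCoeffs σ K N (g * h) = ∑ e : {e : σ →₀ ℕ // e.degree < N},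
      MvPowerSeries.coeff e.1 g • truncCoeffs σ K N (MvPowerSeries.monomial e.1 1 * h) := by
  classical
  let t : MvPowerSeries σ K := ∑ e : {e : σ →₀ ℕ // e.degree < N},
    MvPowerSeries.coeff e.1 g • MvPowerSeries.monomial e.1 1
  have ht : g - t ∈ maximalIdeal (MvPowerSeries σ K) ^ N := by
    refine mem_maximalIdeal_pow_iff.2 fun d hd => ?_
    rw [map_sub, map_sum, sub_eq_zero, Fintype.sum_eq_single
      (⟨d, hd⟩ : {e : σ →₀ ℕ // e.degree < N})]
    · simp
    · intro e he
      simp [MvPowerSeries.coeff_monomial, Subtype.ext_iff.not.1 he.symm]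
  have hker : (g - t) * h ∈ LinearMap.ker (truncCoeffs σ K N) := by
    rw [ker_truncCoeffs]
    exact Ideal.mul_mem_right h _ ht
  rw [sub_mul, LinearMap.sub_mem_ker_iff] at hker
  simpa only [t, Finset.sum_mul, map_sum, smul_mul_assoc, map_smul] using hker

theorem map_truncCoeffs_span [Finite ι] (N : ℕ) (h : ι → MvPowerSeries σ K) :
    ((Ideal.span (range h)).restrictScalars K).map (truncCoeffs σ K N) =
      Submodule.span K (range (macaulayMatrix N h).col) := by
  apply le_antisymm
  · rw [Submodule.map_le_iff_le_comap]
    intro g hg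
    have := Fintype.ofFinite ι
    obtain ⟨c, rfl⟩ := Ideal.mem_span_range_iff_exists_fun.1 hg
    rw [Submodule.mem_comap, map_sum]
    refine sum_mem fun i _ => ?_
    rw [truncCoeffs_mul]
    exact sum_mem fun e _ => Submodule.smul_mem _ _ (Submodule.subset_span ⟨(e, i), rfl⟩)
  · rw [Submodule.span_le]
    rintro _ ⟨⟨e, i⟩, rfl⟩
    exact ⟨_, Ideal.mul_mem_left _ _ (Ideal.subset_span ⟨i, rfl⟩), rfl⟩

theorem rank_macaulayMatrix_add_finrank [Fintype ι] (N : ℕ) (h : ι → MvPowerSeries σ K) :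
    (macaulayMatrix N h).rank +
        Module.finrank K (MvPowerSeries σ K ⧸
          Ideal.span (range h) ⊔ maximalIdeal (MvPowerSeries σ K) ^ N) =
      Fintype.card {e : σ →₀ ℕ // e.degree < N} := by
  let T := truncCoeffs σ K N
  let J := (Ideal.span (range h)).restrictScalars K
  have hker : LinearMap.ker ((J.map T).mkQ ∘ₗ T) =
      (Ideal.span (range h) ⊔ maximalIdeal (MvPowerSeries σ K) ^ N).restrictScalars K := by
    rw [LinearMap.ker_comp, Submodule.ker_mkQ, Submodule.comap_map_eq, ker_truncCoeffs,
      Submodule.restrictScalars_sup]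
  have e := ((J.map T).mkQ ∘ₗ T).quotKerEquivOfSurjective
    ((J.map T).mkQ_surjective.comp (truncCoeffs_surjective N))
  rw [hker] at e
  have hquot : Module.finrank K (MvPowerSeries σ K ⧸
      Ideal.span (range h) ⊔ maximalIdeal (MvPowerSeries σ K) ^ N) = _ := e.finrank_eq
  rw [hquot, Matrix.rank_eq_finrank_span_cols, ← map_truncCoeffs_span, add_comm,
    Submodule.finrank_quotient_add_finrank, Module.finrank_fintype_fun_eq_card]

end Macaulay

section Taylor

open IsLocalRing (maximalIdeal)

variable {σ R K : Type*} [CommRing R] [Field K]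

/-- The Taylor expansion at the point `p`, as a homomorphism to formal power series. -/
def taylor (p : σ → R) : MvPolynomial σ R →ₐ[R] MvPowerSeries σ R :=
  aeval fun j => MvPowerSeries.X j + MvPowerSeries.C (p j)

theorem constantCoeff_taylor (p : σ → R) (f : MvPolynomial σ R) :
    MvPowerSeries.constantCoeff (taylor p f) = eval p f := by
  suffices h : (MvPowerSeries.constantCoeff (σ := σ)).comp (taylor p : _ →+* _) = eval p from
    RingHom.congr_fun h f
  ext i <;> simp [taylor, MvPowerSeries.algebraMap_apply]

theorem isUnit_taylor_iff {p : σ → K} {f : MvPolynomial σ K} :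
    IsUnit (taylor p f) ↔ eval p f ≠ 0 := by
  rw [MvPowerSeries.isUnit_iff_constantCoeff, constantCoeff_taylor, isUnit_iff_ne_zero]

variable [Finite σ]

theorem maximalIdeal_eq_span_X :
    maximalIdeal (MvPowerSeries σ K) = Ideal.span (range MvPowerSeries.X) := by
  refine le_antisymm (fun g hg => ?_) (Ideal.span_le.2 ?_)
  · have hS := mem_span_monomial_of_forall_exists_le
      (finite_range fun i : σ => Finsupp.single i 1) (g := g) fun d hd => ?_
    · rwa [← range_comp] at hS
    · obtain ⟨i, hi⟩ : ∃ i, d i ≠ 0 := by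
        by_contra! h
        rw [show d = 0 from Finsupp.ext h] at hd
        exact hd (mem_maximalIdeal_iff_constantCoeff.1 hg)
      exact ⟨_, ⟨i, rfl⟩, Finsupp.single_le_iff.2 (Nat.one_le_iff_ne_zero.2 hi)⟩
  · rintro _ ⟨i, rfl⟩
    exact mem_maximalIdeal_iff_constantCoeff.2 (MvPowerSeries.constantCoeff_X i)

theorem finite_quotient_maximalIdeal_pow (N : ℕ) :
    Module.Finite K (MvPowerSeries σ K ⧸ maximalIdeal (MvPowerSeries σ K) ^ N) := by
  have e := (truncCoeffs σ K N).quotKerEquivOfSurjective (truncCoeffs_surjective N)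
  rw [ker_truncCoeffs] at e
  exact Module.Finite.equiv e.symm

variable [IsAlgClosed K] {I : Ideal (MvPolynomial σ K)}

theorem X_mem_radical_map_taylor (hI : (zeroLocus K I).Finite) (p : σ → K) (i : σ) :
    MvPowerSeries.X i ∈ (I.map (taylor p)).radical := by
  classical
  let u : MvPolynomial σ K := ∏ q ∈ hI.toFinset with q i ≠ p i, (X i - C (q i))
  have hvanish : (X i - C (p i)) * u ∈ vanishingIdeal K (zeroLocus K I) := by
    intro q hq
    rw [map_mul, mul_eq_zero]
    by_cases hqp : q i = p i
    · exact .inl (by simp [hqp])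
    · refine .inr ?_
      rw [map_prod]
      exact Finset.prod_eq_zero (Finset.mem_filter.2 ⟨hI.mem_toFinset.2 hq, hqp⟩) (by simp)
  have hunit : IsUnit (taylor p u) := by
    rw [isUnit_taylor_iff, map_prod, Finset.prod_ne_zero_iff]
    intro q hq
    simpa [sub_eq_zero, eq_comm] using (Finset.mem_filter.1 hq).2
  have hX : taylor p (X i - C (p i)) = MvPowerSeries.X i := by
    rw [map_sub, ← algebraMap_eq, AlgHom.commutes, taylor, aeval_X, MvPowerSeries.algebraMap_apply,
      Algebra.algebraMap_self, RingHom.id_apply, add_sub_cancel_right]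
  rw [vanishingIdeal_zeroLocus_eq_radical] at hvanish
  have hmem := Ideal.map_radical_le (taylor p) (Ideal.mem_map_of_mem (taylor p) hvanish)
  rwa [map_mul, hX, Ideal.mul_unit_mem_iff_mem _ hunit] at hmem

theorem finite_quotient_map_taylor (hI : (zeroLocus K I).Finite) (p : σ → K) :
    Module.Finite K (MvPowerSeries σ K ⧸ I.map (taylor p)) := by
  have hrad : maximalIdeal (MvPowerSeries σ K) ≤ (I.map (taylor p)).radical := by
    rw [maximalIdeal_eq_span_X, Ideal.span_le]
    rintro _ ⟨i, rfl⟩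
    exact X_mem_radical_map_taylor hI p i
  obtain ⟨N, hN⟩ := Ideal.exists_pow_le_of_le_radical_of_fg hrad (IsNoetherian.noetherian _)
  have := finite_quotient_maximalIdeal_pow (σ := σ) (K := K) N
  exact Module.Finite.of_surjective (Ideal.Quotient.factorₐ K hN).toLinearMap
    (Ideal.Quotient.factor_surjective hN)

end Taylor

section MilnorNumber

open IsLocalRing (maximalIdeal)

variable {n : ℕ} {f : MvPolynomial (Fin n) ℂ} {p : Fin n → ℂ}

theorem jacIdeal_eq_span_taylor (f : MvPolynomial (Fin n) ℂ) (p : Fin n → ℂ) :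
    jacIdeal f p = Ideal.span (range fun i => taylor p (pderiv i f)) := by
  have h : (coeToMvPowerSeries.algHom ℂ).comp (aeval fun j => X j + C (p j)) = taylor p := by
    ext j : 1
    simp [taylor]
  simp only [← h]
  simp [jacIdeal]

theorem affSing_eq_zeroLocus (f : MvPolynomial (Fin n) ℂ) :
    AffSing f = zeroLocus ℂ (Ideal.span (range fun i => pderiv i f)) := by
  ext x
  simp [AffSing, zeroLocus_span]

theorem finite_quotient_jacIdeal (hf : (AffSing f).Finite) (p : Fin n → ℂ) :
    Module.Finite ℂ (MvPowerSeries (Fin n) ℂ ⧸ jacIdeal f p) := by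
  rw [affSing_eq_zeroLocus] at hf
  have := finite_quotient_map_taylor hf p
  have hmap : jacIdeal f p = (Ideal.span (range fun i => pderiv i f)).map (taylor p) := by
    rw [jacIdeal_eq_span_taylor, Ideal.map_span, ← range_comp]
    rfl
  rwa [hmap]

theorem muLoc_pos (hf : (AffSing f).Finite) (hp : p ∈ AffSing f) : 0 < muLoc f p := by
  have := finite_quotient_jacIdeal hf p
  have hle : jacIdeal f p ≤ maximalIdeal (MvPowerSeries (Fin n) ℂ) := by
    rw [jacIdeal_eq_span_taylor, Ideal.span_le]
    rintro _ ⟨i, rfl⟩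
    exact mem_maximalIdeal_iff_constantCoeff.2 ((constantCoeff_taylor _ _).trans (hp i))
  have := Ideal.Quotient.nontrivial_iff.2 (ne_top_of_le_ne_top Ideal.IsPrime.ne_top' hle)
  exact Module.finrank_pos

theorem muLoc_eq_iff_rank (hf : (AffSing f).Finite) (p : Fin n → ℂ) (ν : ℕ) :
    muLoc f p = ν ↔ (macaulayMatrix (ν + 1) fun i => taylor p (pderiv i f)).rank + ν =
      Fintype.card {e : Fin n →₀ ℕ // e.degree < ν + 1} := by
  have := finite_quotient_jacIdeal hf p
  have hrank := rank_macaulayMatrix_add_finrank (ν + 1) fun i => taylor p (pderiv i f)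
  rw [muLoc, finrank_quotient_eq_iff_sup_pow (I := maximalIdeal (MvPowerSeries (Fin n) ℂ))
    (IsNoetherian.noetherian _) (IsLocalRing.maximalIdeal_le_jacobson ⊥), ← hrank,
    jacIdeal_eq_span_taylor]
  omega

end MilnorNumber

section Families

variable {E : Type*} [AddCommGroup E]

section

variable {K σ : Type*} [CommRing K] [Module K E] {f : E → MvPolynomial σ K} {p : E → σ → K}

theorem IsPolyMap.eval_pderiv (hf : IsPolyMap K f) (hp : ∀ j, IsPolyMap K fun x => p x j) (i : σ) :
    IsPolyMap K fun x => eval (p x) (pderiv i (f x)) := by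
  simp only [← coe_aeval_eq_eval]
  exact aeval (hf.linearMap_comp (pderiv i).toLinearMap) hp

theorem IsPolyMap.macaulayMatrix_taylor_pderiv (hf : IsPolyMap K f)
    (hp : ∀ j, IsPolyMap K fun x => p x j) (N : ℕ) (e a) :
    IsPolyMap K fun x => macaulayMatrix N (fun i => taylor (p x) (pderiv i (f x))) e a := by
  refine linearMap_comp (MvPowerSeries.coeff e.1) (mul (const _)
    (aeval (hf.linearMap_comp (pderiv a.2).toLinearMap) fun j => ?_))
  simp only [MvPowerSeries.c_eq_algebraMap]
  exact (const (MvPowerSeries.X j)).add (hp j).algebraMap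

end

variable [Module ℂ E] {n : ℕ} {f : E → MvPolynomial (Fin n) ℂ}

theorem IsConstructiblePred.mem_affSing {p : E → Fin n → ℂ} (hf : IsPolyMap ℂ f)
    (hp : IsPolyMap ℂ p) : IsConstructiblePred ℂ fun x => p x ∈ AffSing (f x) :=
  finite_forall fun i => eq_zero (hf.eval_pderiv (by fun_prop) i)

variable [FiniteDimensional ℂ E]

theorem IsConstructiblePred.affSing_finite_and_mu_eq (hf : IsPolyMap ℂ f) (m : ℕ) :
    IsConstructiblePred ℂ fun x => (AffSing (f x)).Finite ∧ mu (f x) = m := by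
  have hrank {r : ℕ} (ν : Fin r → Fin (m + 1)) (x : E) (y : Fin r → Fin n → ℂ) :
      (Function.Injective y ∧ range y = AffSing (f x)) ∧ (∀ t, muLoc (f x) (y t) = ν t) ↔
        (Function.Injective y ∧ range y = AffSing (f x)) ∧ ∀ t,
          (macaulayMatrix (ν t + 1) fun i => taylor (y t) (pderiv i (f x))).rank + ν t =
            Fintype.card {e : Fin n →₀ ℕ // e.degree < ν t + 1} :=
    and_congr_right fun h => forall_congr' fun t =>
      muLoc_eq_iff_rank (h.2 ▸ finite_range y) (y t) (ν t)
  simp only [mu, finite_and_finsum_mem_eq_iff fun h _ => muLoc_pos h, hrank]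
  refine finite_exists fun r => finite_exists fun ν => .and (.const _) (.exists (.and ?_ ?_))
  · exact injective_and_range_eq (Q := fun x q => q ∈ AffSing (f x))
      (mem_affSing (by fun_prop) (by fun_prop)) r
  · exact finite_forall fun t => rank_add_eq
      (IsPolyMap.macaulayMatrix_taylor_pderiv (f := fun z : E × (Fin r → Fin n → ℂ) => f z.1)
        (p := fun z => z.2 t) (by fun_prop) (by fun_prop) _) _ _

theorem IsConstructiblePred.encard_Baff_eq (hf : IsPolyMap ℂ f) (k : ℕ) :
    IsConstructiblePred ℂ fun x => (Baff (f x)).encard = k := by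
  refine encard_eq (Q := fun x a => ∃ q, q ∈ AffSing (f x) ∧ eval q (f x) = a) (.exists ?_) k
  refine .and (mem_affSing (by fun_prop) (by fun_prop)) (.eq ?_ (by fun_prop))
  simp only [← coe_aeval_eq_eval]
  exact .aeval (by fun_prop) (by fun_prop)

end Families

section CoefficientSpace

theorem totalDegree_eq_iff_exists_coeff_ne_zero {σ R : Type*} [CommSemiring R]
    {f : MvPolynomial σ R} {d : ℕ} (hd : f.totalDegree ≤ d) :
    f.totalDegree = d ↔ d = 0 ∨ ∃ b : {b : σ →₀ ℕ // b.degree = d}, coeff b.1 f ≠ 0 := by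
  constructor
  · intro hf
    refine or_iff_not_imp_left.2 fun hd0 => ?_
    have hne : f.support.Nonempty := by
      rw [support_nonempty]
      rintro rfl
      exact hd0 (hf.symm.trans totalDegree_zero)
    obtain ⟨b, hb, hbf⟩ := Finset.exists_mem_eq_sup _ hne fun s => s.sum fun _ e => e
    exact ⟨⟨b, hbf.symm.trans hf⟩, mem_support_iff.1 hb⟩
  · rintro (rfl | ⟨⟨b, rfl⟩, hb⟩)
    · exact Nat.le_zero.1 hd
    · exact hd.antisymm (le_totalDegree (mem_support_iff.2 hb))

variable {n d : ℕ}

theorem totalDegree_toPoly_le (c : CoeffIdx n d → ℂ) : (toPoly c).totalDegree ≤ d := by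
  refine totalDegree_finsetSum_le fun e _ => (totalDegree_smul_le _ _).trans ?_
  refine (totalDegree_monomial_le _ _).trans ?_
  rw [Finsupp.sum_fintype _ _ fun _ => rfl]
  exact e.2

@[fun_prop]
theorem isPolyMap_toPoly : IsPolyMap ℂ (toPoly : (CoeffIdx n d → ℂ) → _) := by
  unfold toPoly
  fun_prop

theorem isConstructiblePred_totalDegree_toPoly_eq :
    IsConstructiblePred ℂ fun c : CoeffIdx n d → ℂ => (toPoly c).totalDegree = d := by
  have : Finite {b : Fin n →₀ ℕ // b.degree = d} := Finsupp.finite_of_degree_eq d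
  simp only [totalDegree_eq_iff_exists_coeff_ne_zero (totalDegree_toPoly_le _)]
  exact .or (.const _) (.finite_exists fun b => .not
    (.eq_zero (isPolyMap_toPoly.linearMap_comp (lcoeff ℂ b.1))))

end CoefficientSpace

/-- after Broughton. For fixed `n, d, m, k`, the set of polynomials of
degree exactly `d` in `n` variables, with isolated affine singularities, total Milnor
number `μ(f) = m` and `#B_aff(f) = k`, is a constructible subset of the coefficient
space `ℂ^N` of polynomials of degree at most `d`. -/
theorem constructible_mu_Baff (n d m k : ℕ) :
    IsConstructibleC {c : CoeffIdx n d → ℂ |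
      (toPoly c).totalDegree = d ∧
      (AffSing (toPoly c)).Finite ∧
      mu (toPoly c) = m ∧
      (Baff (toPoly c)).ncard = k} := by
  have hdeg := isConstructiblePred_totalDegree_toPoly_eq (n := n) (d := d)
  have hmu := IsConstructiblePred.affSing_finite_and_mu_eq (isPolyMap_toPoly (n := n) (d := d)) m
  have hBaff := IsConstructiblePred.encard_Baff_eq (isPolyMap_toPoly (n := n) (d := d)) k
  have hncard {f : MvPolynomial (Fin n) ℂ} (hf : (AffSing f).Finite) :
      (Baff f).ncard = k ↔ (Baff f).encard = k := by
    have hB : (Baff f).Finite := hf.image _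
    rw [← hB.cast_ncard_eq, Nat.cast_inj]
  convert (hdeg.and (hmu.and hBaff)).isConstructibleC using 4 with c
  rw [and_assoc]
  exact and_congr_right fun hf => and_congr_right fun _ => hncard hf

end PolyTop
end
end

section
/- Let f ∈ ℂ[x₁,…,xₙ] have degree d ≥ 1, with homogenisation P̃ by x₀, and let X = {([x:x₀],t) ∈ ℙⁿ × ℂ : P̃(x,x₀) − t x₀^d = 0}. Then the singular locus of the hypersurface X is exactly Σ(f) × ℂ = {([p:0],t) : [p] ∈ Σ(f), t ∈ ℂ}; in particular X is smooth at every point of its affine part {x₀ ≠ 0}, and Sing X is contained in the hyperplane at infinity {x₀ = 0}. -/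
/- Common definitions: singularity-theoretic invariants of complex polynomials,
following Bodin–Tibăr, "Topological equivalence of complex polynomials". -/

open MvPolynomial Set

noncomputable section

namespace PolyTop

/-!
Write `P_k` for the degree `k` part of `f`. The `t`-derivative of the equation of `X` is
`-x₀ ^ d`, which forces every singular point into `{x₀ = 0}`. For fixed `t` the equation is the
form `XtPoly f t` of degree `d`, so by Euler's identity its value and its partial derivatives in
a chart vanish exactly when its whole homogeneous gradient does. At `(0, u)` that gradient
consists of the gradient of `P_d` at `u` and, if `2 ≤ d`, of `P_{d-1}(u)`. If `d = 1`, the term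
`t x₀ ^ d` also contributes to the `x₀`-derivative, but then `P_d` is a nonzero linear form, whose
gradient never vanishes.
-/

section Homogeneous

variable {σ R : Type*} [CommSemiring R]

lemma eval_smul_of_isHomogeneous {F : MvPolynomial σ R} {d : ℕ} (hF : F.IsHomogeneous d)
    (a : R) (v : σ → R) : eval (a • v) F = a ^ d * eval v F := by
  rw [eval_eq, eval_eq, Finset.mul_sum]
  refine Finset.sum_congr rfl fun e he => ?_
  have degree_eq : ∑ i ∈ e.support, e i = d := (hF.degree_eq_sum_deg_support he).symm
  simp only [Pi.smul_apply, smul_eq_mul, mul_pow, Finset.prod_mul_distrib,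
    Finset.prod_pow_eq_pow_sum, degree_eq]
  exact mul_left_comm _ _ _

lemma sum_mul_eval_pderiv_of_isHomogeneous [Fintype σ] {F : MvPolynomial σ R} {d : ℕ}
    (hF : F.IsHomogeneous d) (v : σ → R) : ∑ i, v i * eval v (pderiv i F) = d * eval v F := by
  simpa using congrArg (eval v) hF.sum_X_mul_pderiv

lemma eval_eq_zero_and_forall_ne_eval_pderiv_eq_zero_iff [Finite σ] [NoZeroDivisors R]
    {F : MvPolynomial σ R} {d : ℕ} (hF : F.IsHomogeneous d) (hd : (d : R) ≠ 0) {v : σ → R}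
    {j : σ} (hj : v j ≠ 0) :
    (eval v F = 0 ∧ ∀ i ≠ j, eval v (pderiv i F) = 0) ↔ ∀ i, eval v (pderiv i F) = 0 := by
  cases nonempty_fintype σ
  have euler := sum_mul_eval_pderiv_of_isHomogeneous hF v
  refine ⟨fun ⟨hv, hne⟩ i => ?_, fun h => ⟨?_, fun i _ => h i⟩⟩
  · obtain rfl | hi := eq_or_ne i j
    · rw [Finset.sum_eq_single i (fun k _ hk => by rw [hne k hk, mul_zero]) (by simp), hv,
        mul_zero] at euler
      exact (mul_eq_zero.mp euler).resolve_left hj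
    · exact hne i hi
  · simp only [h, mul_zero, Finset.sum_const_zero] at euler
    exact (mul_eq_zero.mp euler.symm).resolve_left hd

lemma eq_zero_of_isHomogeneous_one_of_eval_pderiv_eq_zero [Finite σ] {F : MvPolynomial σ R}
    (hF : F.IsHomogeneous 1) {v : σ → R} (hv : ∀ i, eval v (pderiv i F) = 0) : F = 0 := by
  have pderiv_eq_zero (i : σ) : pderiv i F = 0 := by
    have hconst : pderiv i F = C _ :=
      totalDegree_eq_zero_iff_eq_C.mp (Nat.le_zero.mp (hF.pderiv (i := i)).totalDegree_le)
    have hcoeff := hv i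
    rw [hconst, eval_C] at hcoeff
    rw [hconst, hcoeff, C_0]
  cases nonempty_fintype σ
  simpa [pderiv_eq_zero] using hF.sum_X_mul_pderiv.symm

lemma homogeneousComponent_totalDegree_ne_zero {f : MvPolynomial σ R} (hf : f ≠ 0) :
    homogeneousComponent f.totalDegree f ≠ 0 := by
  obtain ⟨e, he, hdeg⟩ := Finset.exists_mem_eq_sup f.support (support_nonempty.mpr hf)
    fun e => e.sum fun _ k => k
  refine ne_zero_iff.mpr ⟨e, ?_⟩
  have degree_eq : e.degree = f.totalDegree := hdeg.symm
  simpa [coeff_homogeneousComponent, degree_eq] using he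

lemma two_le_totalDegree_of_eval_pderiv_homogeneousComponent_eq_zero [Finite σ]
    {f : MvPolynomial σ R} (hf : f.totalDegree ≠ 0) {v : σ → R}
    (hv : ∀ i, eval v (pderiv i (homogeneousComponent f.totalDegree f)) = 0) :
    2 ≤ f.totalDegree := by
  by_contra hlt
  have hone : f.totalDegree = 1 := by omega
  refine homogeneousComponent_totalDegree_ne_zero (f := f) (by rintro rfl; simp at hf) ?_
  refine eq_zero_of_isHomogeneous_one_of_eval_pderiv_eq_zero ?_ hv
  exact hone ▸ homogeneousComponent_isHomogeneous _ f

end Homogeneous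

section Calculus

variable {σ τ R : Type*} [CommSemiring R]

lemma pderiv_bind₁ [Fintype σ] (g : σ → MvPolynomial τ R) (F : MvPolynomial σ R) (i : τ) :
    pderiv i (bind₁ g F) = ∑ l, bind₁ g (pderiv l F) * pderiv i (g l) := by
  classical
  induction F using MvPolynomial.induction_on with
  | C a => simp
  | add p q hp hq => simp only [map_add, hp, hq, add_mul, Finset.sum_add_distrib]
  | mul_X p k hp =>
    simp [hp, pderiv_X, Pi.single_apply, apply_ite, add_mul, Finset.sum_add_distrib,
      Finset.mul_sum, mul_assoc]

lemma pderiv_rename_of_notMem_range {φ : σ → τ} {i : τ} (hi : i ∉ range φ)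
    (p : MvPolynomial σ R) : pderiv i (rename φ p) = 0 := by
  classical
  refine pderiv_eq_zero_of_notMem_vars fun h => hi ?_
  obtain ⟨k, -, hk⟩ := Finset.mem_image.mp (vars_rename φ p h)
  exact ⟨k, hk⟩

end Calculus

lemma smul_mem_AffSing_iff {n : ℕ} {F : MvPolynomial (Fin n) ℂ} {d : ℕ} (hF : F.IsHomogeneous d)
    {a : ℂ} (ha : a ≠ 0) {v : Fin n → ℂ} : a • v ∈ AffSing F ↔ v ∈ AffSing F :=
  forall_congr' fun i => by simp [eval_smul_of_isHomogeneous hF.pderiv, ha]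

section Chart

variable {n : ℕ} (j : Fin (n + 1)) (F : MvPolynomial (Fin (n + 1)) ℂ) (c : Fin n → ℂ)

lemma eval_chartPoly : eval c (chartPoly j F) = eval (j.insertNth 1 c) F := by
  have hcoord : (fun i => aeval c (j.insertNth (α := fun _ => MvPolynomial (Fin n) ℂ) 1 X i)) =
      j.insertNth 1 c := by
    funext i
    induction i using Fin.succAboveCases j <;> simp
  rw [chartPoly, aeval_eq_bind₁, ← aeval_eq_eval, aeval_bind₁, hcoord, aeval_eq_eval]

lemma pderiv_chartPoly (i : Fin n) :
    pderiv i (chartPoly j F) = chartPoly j (pderiv (j.succAbove i) F) := by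
  classical
  simp [chartPoly, pderiv_bind₁, Fin.sum_univ_succAbove _ j, pderiv_X, Pi.single_apply]

lemma insertNth_one_chartPoint {v : Fin (n + 1) → ℂ} (hj : v j ≠ 0) :
    j.insertNth 1 (chartPoint j v) = (v j)⁻¹ • v := by
  funext i
  induction i using Fin.succAboveCases j with
  | x => simp [hj]
  | p i => simp [chartPoint, div_eq_inv_mul]

end Chart

section XtPoly

variable {n : ℕ} (f : MvPolynomial (Fin n) ℂ) (t : ℂ)

lemma isHomogeneous_homog : (homog f).IsHomogeneous f.totalDegree := by
  refine IsHomogeneous.sum _ _ _ fun k hk => ?_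
  have hadd : f.totalDegree - k + k = f.totalDegree :=
    Nat.sub_add_cancel (Finset.mem_range_succ_iff.mp hk)
  have hterm := (isHomogeneous_X_pow (R := ℂ) (0 : Fin (n + 1)) (f.totalDegree - k)).mul
    ((homogeneousComponent_isHomogeneous k f).rename_isHomogeneous (f := Fin.succ))
  rwa [hadd] at hterm

lemma isHomogeneous_XtPoly : (XtPoly f t).IsHomogeneous f.totalDegree :=
  (isHomogeneous_homog f).sub ((isHomogeneous_X_pow 0 _).C_mul t)

variable {f} (u : Fin n → ℂ)

lemma eval_cons_zero_pderiv_succ_XtPoly (i : Fin n) :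
    eval (Fin.cons 0 u) (pderiv i.succ (XtPoly f t)) =
      eval u (pderiv i (homogeneousComponent f.totalDegree f)) := by
  have pderiv_X_zero : pderiv i.succ (X 0 : MvPolynomial (Fin (n + 1)) ℂ) = 0 :=
    pderiv_X_of_ne (Fin.succ_ne_zero i).symm
  have hcomp : (Fin.cons 0 u : Fin (n + 1) → ℂ) ∘ Fin.succ = u := rfl
  simp only [XtPoly, homog, map_sub, map_sum]
  rw [Finset.sum_eq_single f.totalDegree]
  · simp [pderiv_X_zero, eval_rename, hcomp, pderiv_rename (Fin.succ_injective n)]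
  · intro k hk hne
    have hpos : f.totalDegree - k ≠ 0 := by grind
    simp [hpos, pderiv_X_zero]
  · simp

lemma eval_cons_zero_pderiv_zero_XtPoly (hf : 2 ≤ f.totalDegree) :
    eval (Fin.cons 0 u) (pderiv 0 (XtPoly f t)) =
      eval u (homogeneousComponent (f.totalDegree - 1) f) := by
  have pderiv_rename_succ (p : MvPolynomial (Fin n) ℂ) : pderiv 0 (rename Fin.succ p) = 0 :=
    pderiv_rename_of_notMem_range (by simp) p
  have hcomp : (Fin.cons 0 u : Fin (n + 1) → ℂ) ∘ Fin.succ = u := rfl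
  have hpred : f.totalDegree - 1 ≠ 0 := by omega
  simp only [XtPoly, homog, map_sub, map_sum]
  rw [Finset.sum_eq_single (f.totalDegree - 1)]
  · have hone : f.totalDegree - (f.totalDegree - 1) = 1 := by omega
    simp [hone, hpred, pderiv_rename_succ, eval_rename, hcomp]
  · intro k _ hne
    obtain hzero | hpos : f.totalDegree - k = 0 ∨ f.totalDegree - k - 1 ≠ 0 := by omega
    · simp [hzero, pderiv_rename_succ]
    · simp [hpos, pderiv_rename_succ]
  · grind

lemma cons_zero_mem_AffSing_XtPoly_iff (hf : f.totalDegree ≠ 0) :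
    Fin.cons 0 u ∈ AffSing (XtPoly f t) ↔
      u ∈ AffSing (homogeneousComponent f.totalDegree f) ∧
        eval u (homogeneousComponent (f.totalDegree - 1) f) = 0 := by
  simp only [AffSing, mem_ofPred_eq, Fin.forall_fin_succ, eval_cons_zero_pderiv_succ_XtPoly]
  rw [and_comm]
  refine and_congr_right fun hgrad => ?_
  rw [eval_cons_zero_pderiv_zero_XtPoly t u
    (two_le_totalDegree_of_eval_pderiv_homogeneousComponent_eq_zero hf hgrad)]

end XtPoly

section XXchartEq

variable {n : ℕ} (f : MvPolynomial (Fin n) ℂ) (j : Fin (n + 1)) (c : Fin n → ℂ) (t : ℂ)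

lemma eval_snoc_XXchartEq :
    eval (Fin.snoc c t) (XXchartEq f j) = eval (j.insertNth 1 c) (XtPoly f t) := by
  simp [XXchartEq, XtPoly, eval_rename, eval_chartPoly]

lemma eval_snoc_pderiv_castSucc_XXchartEq (i : Fin n) :
    eval (Fin.snoc c t) (pderiv i.castSucc (XXchartEq f j)) =
      eval (j.insertNth 1 c) (pderiv (j.succAbove i) (XtPoly f t)) := by
  simp [XXchartEq, XtPoly, pderiv_rename (Fin.castSucc_injective n), pderiv_chartPoly,
    pderiv_X_of_ne (Fin.castSucc_ne_last i).symm, eval_rename, eval_chartPoly]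

lemma eval_snoc_pderiv_last_XXchartEq :
    eval (Fin.snoc c t) (pderiv (Fin.last n) (XXchartEq f j)) =
      -(j.insertNth 1 c : Fin (n + 1) → ℂ) 0 ^ f.totalDegree := by
  have pderiv_rename_castSucc (p : MvPolynomial (Fin n) ℂ) :
      pderiv (Fin.last n) (rename Fin.castSucc p) = 0 :=
    pderiv_rename_of_notMem_range (by simp) p
  simp [XXchartEq, pderiv_rename_castSucc, eval_rename, eval_chartPoly]

lemma eval_eq_zero_and_snoc_mem_AffSing_XXchartEq_iff (hf : f.totalDegree ≠ 0) :
    (eval (Fin.snoc c t) (XXchartEq f j) = 0 ∧ Fin.snoc c t ∈ AffSing (XXchartEq f j)) ↔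
      (j.insertNth 1 c : Fin (n + 1) → ℂ) 0 = 0 ∧
        j.insertNth 1 c ∈ AffSing (XtPoly f t) := by
  set w : Fin (n + 1) → ℂ := j.insertNth 1 c with hw
  have hj : w j ≠ 0 := by simp [hw]
  have euler : (eval w (XtPoly f t) = 0 ∧
      ∀ i, eval w (pderiv (j.succAbove i) (XtPoly f t)) = 0) ↔ w ∈ AffSing (XtPoly f t) := by
    refine Iff.trans (and_congr_right' ?_) (eval_eq_zero_and_forall_ne_eval_pderiv_eq_zero_iff
      (isHomogeneous_XtPoly f t) (Nat.cast_ne_zero.mpr hf) hj)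
    simp [Fin.forall_iff_succAbove j]
  have hlast : -w 0 ^ f.totalDegree = 0 ↔ w 0 = 0 := by simp [hf]
  change _ ∧ (∀ i, _) ↔ _
  simp only [Fin.forall_fin_succ', eval_snoc_XXchartEq, eval_snoc_pderiv_castSucc_XXchartEq,
    eval_snoc_pderiv_last_XXchartEq, ← hw, hlast]
  rw [← and_assoc, euler, and_comm]

end XXchartEq

section Proj

variable {n : ℕ}

lemma rep_pivot_ne_zero {k : ℕ} (P : Proj k) : P.rep (pivot P) ≠ 0 :=
  (Function.ne_iff.mp P.rep_nonzero).choose_spec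

lemma mem_SingXX_iff {f : MvPolynomial (Fin n) ℂ} (hf : f.totalDegree ≠ 0)
    (z : Proj (n + 1) × ℂ) :
    z ∈ SingXX f ↔ z.1.rep 0 = 0 ∧ z.1.rep ∈ AffSing (XtPoly f z.2) := by
  have hpivot := rep_pivot_ne_zero z.1
  refine (eval_eq_zero_and_snoc_mem_AffSing_XXchartEq_iff f _ _ z.2 hf).trans ?_
  rw [insertNth_one_chartPoint _ hpivot,
    smul_mem_AffSing_iff (isHomogeneous_XtPoly f z.2) (inv_ne_zero hpivot)]
  simp [hpivot]

lemma projEmbInf_mem_SingXX_iff {f : MvPolynomial (Fin n) ℂ} (hf : f.totalDegree ≠ 0)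
    (P : Proj n) (t : ℂ) : (projEmbInf P, t) ∈ SingXX f ↔ P ∈ SigmaSet f := by
  obtain ⟨a, ha⟩ : ∃ a : ℂˣ, a • (Fin.cons 0 P.rep : Fin (n + 1) → ℂ) = (projEmbInf P).rep :=
    Projectivization.exists_smul_eq_mk_rep ℂ _ _
  rw [mem_SingXX_iff hf]
  simp only [← ha, Units.smul_def, smul_mem_AffSing_iff (isHomogeneous_XtPoly f t) a.ne_zero,
    cons_zero_mem_AffSing_XtPoly_iff t P.rep hf]
  simp [SigmaSet, Wset, AffSing]

lemma exists_projEmbInf_eq {Q : Proj (n + 1)} (hQ : Q.rep 0 = 0) : ∃ P, projEmbInf P = Q := by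
  have hcons : Fin.cons 0 (Fin.tail Q.rep) = Q.rep := by rw [← hQ, Fin.cons_self_tail]
  have htail : Fin.tail Q.rep ≠ 0 := fun h => Q.rep_nonzero <| by
    rw [← hcons, h]
    exact Matrix.cons_zero_zero
  obtain ⟨a, ha⟩ := Projectivization.exists_smul_eq_mk_rep ℂ _ htail
  refine ⟨Projectivization.mk ℂ _ htail, ?_⟩
  conv_rhs => rw [← Q.mk_rep]
  refine (Projectivization.mk_eq_mk_iff _ _ _ _ _).mpr ⟨a, ?_⟩
  rw [← ha, ← hcons, Fin.tail_cons]
  funext i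
  cases i using Fin.cases <;> simp [Units.smul_def]

end Proj

/-- §2. Let `f` have degree `d ≥ 1`, with homogenisation `P̃`, and let
`X = {P̃(x,x₀) - t x₀^d = 0} ⊂ ℙ^n × ℂ`. Then the singular locus of the hypersurface `X`
is exactly `Σ(f) × ℂ`; in particular `X` is smooth at every point of its affine part
`{x₀ ≠ 0}` and `Sing X` is contained in the hyperplane at infinity `{x₀ = 0}`. -/
theorem singular_locus_of_X (n d : ℕ) (hd : 1 ≤ d)
    (f : MvPolynomial (Fin n) ℂ) (hdeg : f.totalDegree = d) :
    SingXX f = {z : Proj (n + 1) × ℂ |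
      ∃ (P : Proj n) (t : ℂ), P ∈ SigmaSet f ∧ z = (projEmbInf P, t)} ∧
    ∀ z ∈ SingXX f, z.1.rep 0 = 0 := by
  have hf : f.totalDegree ≠ 0 := by omega
  have rep_zero : ∀ z ∈ SingXX f, z.1.rep 0 = 0 := fun z hz => ((mem_SingXX_iff hf z).mp hz).1
  refine ⟨?_, rep_zero⟩
  ext ⟨Q, t⟩
  constructor
  · intro hz
    obtain ⟨P, rfl⟩ := exists_projEmbInf_eq (rep_zero _ hz)
    exact ⟨P, t, (projEmbInf_mem_SingXX_iff hf P t).mp hz, rfl⟩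
  · rintro ⟨P, t, hP, ⟨⟩⟩
    exact (projEmbInf_mem_SingXX_iff hf P t).mpr hP

end PolyTop
end
end

section
/- For every s ∈ ℂ ∖ {−2, −1}, the polynomial f_s(x,y,z,w) = x²y² + z² + w² + xy + (1+s)x² + x has finite singular locus and total Milnor number μ(f_s) = 2; that is, the quotient ring ℂ[x,y,z,w]/(∂f_s/∂x, ∂f_s/∂y, ∂f_s/∂z, ∂f_s/∂w) is a ℂ-vector space of dimension 2. -/
/-! Let `K` be a field in which `2` and `a = 1 + s` are invertible, and put `u = 1 / (2a)`. The
partial derivatives of `f_s` generate the same ideal as `x² + ux`, `y + 1 + 2a(a + 1)x`, `z` and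
`w`: multiplying `∂f/∂x` by `x` and subtracting `y ∂f/∂y` gives `2ax² + x`, after which `∂f/∂y`
becomes `xy = ax` and `∂f/∂x` becomes linear in `y`. Eliminating `y`, `z` and `w` identifies the
Milnor algebra with `K[x]/(x² + ux)`, of dimension `2`. The critical points correspond to
`K`-algebra homomorphisms from this finite-dimensional algebra to `K`, of which there are finitely
many. -/

/- Common definitions: singularity-theoretic invariants of complex polynomials,
following Bodin–Tibăr, "Topological equivalence of complex polynomials". -/

open MvPolynomial Set

noncomputable section

namespace PolyTop

section FiniteQuotient

variable {σ k K : Type*} [Field k] [Field K] [Algebra k K]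

theorem finite_zeroLocus_of_finite_quotient (I : Ideal (MvPolynomial σ k))
    [Module.Finite k (MvPolynomial σ k ⧸ I)] : (zeroLocus K I).Finite := by
  let evalHom (p : zeroLocus K I) : MvPolynomial σ k ⧸ I →ₐ[k] K :=
    Ideal.Quotient.liftₐ I (aeval p.1) p.2
  have evalHom_injective : Function.Injective evalHom := fun p q hpq ↦
    Subtype.ext <| funext fun i ↦ by
      have eval_X : aeval p.1 (X i) = aeval q.1 (X i : MvPolynomial σ k) :=
        DFunLike.congr_fun hpq (Ideal.Quotient.mk I (X i))
      simpa only [aeval_X] using eval_X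
  exact Finite.of_injective evalHom evalHom_injective

end FiniteQuotient

section Shape

variable {σ R : Type*} [CommRing R]

/-- The ideal in shape position cut out by `m(xⱼ) = 0` and `xᵢ = gᵢ(xⱼ)` for all `i`, as in the
shape lemma for Gröbner bases. The index `i = j` is not excluded; with `g j = X` its equation is
trivial. -/
def shapeIdeal (j : σ) (m : Polynomial R) (g : σ → Polynomial R) : Ideal (MvPolynomial σ R) :=
  Ideal.span (insert (Polynomial.aeval (X j) m)
    (range fun i ↦ X i - Polynomial.aeval (X j) (g i)))

variable {j : σ} {m : Polynomial R} {g : σ → Polynomial R}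

theorem shapeIdeal_le_iff {J : Ideal (MvPolynomial σ R)} :
    shapeIdeal j m g ≤ J ↔ Polynomial.aeval (X j) m ∈ J ∧
      ∀ i, X i - Polynomial.aeval (X j) (g i) ∈ J := by
  simp [shapeIdeal, Ideal.span_le, insert_subset_iff, range_subset_iff]

theorem sub_aeval_mem_shapeIdeal (p : MvPolynomial σ R) :
    p - Polynomial.aeval (X j) (aeval g p) ∈ shapeIdeal j m g := by
  let mkI := Ideal.Quotient.mkₐ R (shapeIdeal j m g)
  have mkI_eq : mkI = (mkI.comp (Polynomial.aeval (X j))).comp (aeval g) :=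
    MvPolynomial.algHom_ext fun i ↦ by
      simpa [mkI, Ideal.Quotient.eq] using (shapeIdeal_le_iff.1 le_rfl).2 i
  exact Ideal.Quotient.eq.1 (DFunLike.congr_fun mkI_eq p)

/-- The projection of `R[xᵢ : i]` to `R[t] / (m)` that substitutes `gᵢ(t)` for `xᵢ`. -/
def shapeHom (m : Polynomial R) (g : σ → Polynomial R) : MvPolynomial σ R →ₐ[R] AdjoinRoot m :=
  (AdjoinRoot.mkₐ m).comp (aeval g)

theorem shapeHom_apply (p : MvPolynomial σ R) :
    shapeHom m g p = AdjoinRoot.mk m (aeval g p) := rfl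

theorem shapeHom_aeval_X (hg : g j = Polynomial.X) (q : Polynomial R) :
    shapeHom m g (Polynomial.aeval (X j) q) = AdjoinRoot.mk m q := by
  rw [shapeHom_apply, ← Polynomial.aeval_algHom_apply, aeval_X, hg, Polynomial.aeval_X_left_apply]

theorem shapeHom_surjective (hg : g j = Polynomial.X) : Function.Surjective (shapeHom m g) :=
  fun y ↦ by
    obtain ⟨q, rfl⟩ := AdjoinRoot.mk_surjective y
    exact ⟨_, shapeHom_aeval_X hg q⟩

theorem ker_shapeHom (hg : g j = Polynomial.X) :
    RingHom.ker (shapeHom m g) = shapeIdeal j m g := by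
  apply le_antisymm
  · intro p hp
    have m_dvd : m ∣ aeval g p := AdjoinRoot.mk_eq_zero.1 hp
    have aeval_mem : Polynomial.aeval (X j) (aeval g p) ∈ shapeIdeal j m g :=
      Ideal.mem_of_dvd _ (map_dvd _ m_dvd) (shapeIdeal_le_iff.1 le_rfl).1
    simpa only [sub_add_cancel] using add_mem (sub_aeval_mem_shapeIdeal p) aeval_mem
  · refine shapeIdeal_le_iff.2 ⟨?_, fun i ↦ ?_⟩
    · rw [RingHom.mem_ker, shapeHom_aeval_X hg, AdjoinRoot.mk_self]
    · rw [RingHom.mem_ker, map_sub, shapeHom_aeval_X hg, shapeHom_apply, aeval_X, sub_self]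

theorem finrank_quotient_shapeIdeal [Nontrivial R] (hm : m.Monic) (hg : g j = Polynomial.X) :
    Module.finrank R (MvPolynomial σ R ⧸ shapeIdeal j m g) = m.natDegree := by
  rw [← ker_shapeHom hg, (Ideal.quotientKerAlgEquivOfSurjective
      (shapeHom_surjective hg)).toLinearEquiv.finrank_eq,
    (AdjoinRoot.powerBasis' hm).finrank, AdjoinRoot.powerBasis'_dim]

end Shape

section Jacobian

/-- The ideal generated by all partial derivatives of `f`; its quotient is the global Milnor
algebra of `f`. -/
def jacobianIdeal {σ R : Type*} [CommSemiring R] (f : MvPolynomial σ R) :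
    Ideal (MvPolynomial σ R) :=
  Ideal.span (range fun i ↦ pderiv i f)

theorem affSing_eq_zeroLocus_jacobianIdeal {n : ℕ} (f : MvPolynomial (Fin n) ℂ) :
    AffSing f = zeroLocus ℂ (jacobianIdeal f) := by
  ext p
  simp [AffSing, jacobianIdeal, zeroLocus_span]

end Jacobian

section Quartic

theorem critical_equations_iff {A : Type*} [CommRing A] {s u x y z w : A}
    (hu : 2 * (1 + s) * u = 1) :
    (2 * x * y ^ 2 + y + 2 * (1 + s) * x + 1 = 0 ∧ 2 * x ^ 2 * y + x = 0 ∧ 2 * z = 0 ∧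
        2 * w = 0) ↔
      x ^ 2 + u * x = 0 ∧ y - (-1 - 2 * (1 + s) * (2 + s) * x) = 0 ∧ z = 0 ∧ w = 0 := by
  constructor
  · rintro ⟨hx, hy, hz, hw⟩
    have x_sq : x ^ 2 + u * x = 0 := by linear_combination u * (x * hx - y * hy) - x ^ 2 * hu
    have x_mul_y : x * y = (1 + s) * x := by
      linear_combination 2 * (1 + s) * y * x_sq - (1 + s) * hy - x * y * hu
    refine ⟨x_sq, ?_, ?_, ?_⟩
    · linear_combination hx - 2 * (y + (1 + s)) * x_mul_y
    · linear_combination (1 + s) * u * hz - z * hu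
    · linear_combination (1 + s) * u * hw - w * hu
  · rintro ⟨x_sq, y_eq, rfl, rfl⟩
    have x_mul_y : x * y = (1 + s) * x := by
      linear_combination x * y_eq - 2 * (1 + s) * (2 + s) * x_sq + (2 + s) * x * hu
    refine ⟨?_, ?_, mul_zero 2, mul_zero 2⟩
    · linear_combination y_eq + 2 * (y + (1 + s)) * x_mul_y
    · linear_combination 2 * x * x_mul_y + 2 * (1 + s) * x_sq - x * hu

variable {R : Type*} [CommRing R]

/-- The polynomial `f_s = x²y² + z² + w² + xy + (1 + s)x² + x`, in the variables
`x, y, z, w = X 0, X 1, X 2, X 3`. -/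
def quarticFamily (s : R) : MvPolynomial (Fin 4) R :=
  X 0 ^ 2 * X 1 ^ 2 + X 2 ^ 2 + X 3 ^ 2 + X 0 * X 1 + C (1 + s) * X 0 ^ 2 + X 0

theorem jacobianIdeal_quarticFamily_le_iff {s : R} {J : Ideal (MvPolynomial (Fin 4) R)} :
    jacobianIdeal (quarticFamily s) ≤ J ↔
      2 * X 0 * X 1 ^ 2 + X 1 + 2 * C (1 + s) * X 0 + 1 ∈ J ∧ 2 * X 0 ^ 2 * X 1 + X 0 ∈ J ∧
        2 * X 2 ∈ J ∧ 2 * X 3 ∈ J := by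
  have pderiv_zero : pderiv 0 (quarticFamily s) =
      2 * X 0 * X 1 ^ 2 + X 1 + 2 * C (1 + s) * X 0 + 1 := by
    simp [quarticFamily, pderiv_X, mul_comm, mul_assoc, mul_left_comm]
  have pderiv_one : pderiv 1 (quarticFamily s) = 2 * X 0 ^ 2 * X 1 + X 0 := by
    simp [quarticFamily, pderiv_X, mul_comm, mul_left_comm]
  have pderiv_two : pderiv 2 (quarticFamily s) = 2 * X 2 := by
    simp [quarticFamily, pderiv_X]
  have pderiv_three : pderiv 3 (quarticFamily s) = 2 * X 3 := by
    simp [quarticFamily, pderiv_X]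
  simp [jacobianIdeal, Ideal.span_le, range_subset_iff, Fin.forall_fin_succ, pderiv_zero,
    pderiv_one, pderiv_two, pderiv_three]

theorem jacobianIdeal_quarticFamily {s u : R} (hu : 2 * (1 + s) * u = 1) :
    jacobianIdeal (quarticFamily s) =
      shapeIdeal 0 (Polynomial.X ^ 2 + Polynomial.C u * Polynomial.X)
        ![Polynomial.X, -1 - Polynomial.C (2 * (1 + s) * (2 + s)) * Polynomial.X, 0, 0] := by
  refine eq_of_forall_ge_iff fun J ↦ ?_
  rw [jacobianIdeal_quarticFamily_le_iff, shapeIdeal_le_iff]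
  let φ := Ideal.Quotient.mk J
  have hu_mod_J : 2 * (1 + φ (C s)) * φ (C u) = 1 := by
    simpa only [map_mul, map_add, map_one, map_ofNat] using congrArg (fun r ↦ φ (C r)) hu
  have critical_mod_J := critical_equations_iff (x := φ (X 0)) (y := φ (X 1)) (z := φ (X 2))
    (w := φ (X 3)) hu_mod_J
  simpa [φ, ← Ideal.Quotient.eq_zero_iff_mem, Fin.forall_fin_succ, map_ofNat] using critical_mod_J

end Quartic

theorem example_total_milnor_number_general {K : Type*} [Field K] (h_two : (2 : K) ≠ 0) {s : K}
    (hs : s ≠ -1) :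
    (zeroLocus K (jacobianIdeal (quarticFamily s))).Finite ∧
      Module.finrank K (MvPolynomial (Fin 4) K ⧸ jacobianIdeal (quarticFamily s)) = 2 := by
  have h_one_add : 1 + s ≠ 0 := fun h ↦ hs (eq_neg_of_add_eq_zero_right h)
  have milnor_eq_two :
      Module.finrank K (MvPolynomial (Fin 4) K ⧸ jacobianIdeal (quarticFamily s)) = 2 := by
    rw [jacobianIdeal_quarticFamily (mul_inv_cancel₀ (mul_ne_zero h_two h_one_add)),
      finrank_quotient_shapeIdeal ?_ ?_]
    · compute_degree!
    · monicity!
    · rfl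
  have := Module.finite_of_finrank_pos (milnor_eq_two ▸ two_pos)
  exact ⟨finite_zeroLocus_of_finite_quotient _, milnor_eq_two⟩

/-- Example 2.2. For every `s ∈ ℂ ∖ {-2,-1}`, the polynomial
`f_s(x,y,z,w) = x²y² + z² + w² + xy + (1+s)x² + x` has finite singular locus and total
Milnor number `μ(f_s) = 2`: the quotient of `ℂ[x,y,z,w]` by the ideal of the partial
derivatives of `f_s` is a `ℂ`-vector space of dimension `2`. -/
theorem example_total_milnor_number (s : ℂ) (hs2 : s ≠ -2) (hs1 : s ≠ -1)
    (f : MvPolynomial (Fin 4) ℂ)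
    (hf : f = X 0 ^ 2 * X 1 ^ 2 + X 2 ^ 2 + X 3 ^ 2 + X 0 * X 1 +
      C (1 + s) * X 0 ^ 2 + X 0) :
    (AffSing f).Finite ∧
    Module.finrank ℂ
      (MvPolynomial (Fin 4) ℂ ⧸ Ideal.span (Set.range fun i : Fin 4 => pderiv i f))
      = 2 := by
  subst hf
  rw [affSing_eq_zeroLocus_jacobianIdeal]
  exact example_total_milnor_number_general two_ne_zero hs1

end PolyTop
end
end
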